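/- Suppose R ∈ ℤ_{>0}^m, C ∈ ℤ_{≥0}^n, K ∈ ℤ_{>0}^{m×n}, T_K(R,C) > 0, and the vector C̃ defined by c̃_j := (Σ_{i=1}^m k_{ij}) − c_j lies in ℤ_{>0}^n. Let G(x,y) := ∏_{i=1}^m ∏_{j=1}^n [1 + x_i y_j + ⋯ + (x_i y_j)^{k_{ij}}], let 𝒩 := ∏_{i=1}^m (1 + Σ_{j=1}^n k_{ij}) + ∏_{j=1}^n (1 + Σ_{i=1}^m k_{ij}), and let ♥ := −ln√(2π|K|) + Σ_{i=1}^m ln√(2π r_i) + Σ_{j=1}^n ln√(2π c̃_j) + (m+n)·ln(e/√(2π)). Then ln ( inf_{x_i,y_j>0} G(x,y)/(x^R y^C) ) ≥ ln T_K(R,C) ≥ ln ( inf_{x_i,y_j>0} G(x,y)/(x^R y^C) ) − ln 𝒩 − ♥, where x^R y^C := ∏_i x_i^{r_i} ∏_j y_j^{c_j}. -/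

import Mathlib

open Real Filter Finset

noncomputable section

/-- `ω(n) = n^n / n!`. -/
def omegaFn (n : ℕ) : ℝ := (n : ℝ) ^ n / (n.factorial : ℝ)

/-- `Ω(V)`: the sum of `ω(v)` over the entries of a vector `V`. -/
def OmegaVec {I : Type*} [Fintype I] (V : I → ℕ) : ℝ := ∑ i, omegaFn (V i)

/-- `Ω(K)`: the sum of `ω(k)` over the entries of a matrix `K`. -/
def OmegaMat {I J : Type*} [Fintype I] [Fintype J] (K : I → J → ℕ) : ℝ :=
  ∑ i, ∑ j, omegaFn (K i j)

/-- `T_K(R,C)`: the number of nonnegative-integer matrices with row sums `R`,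
column sums `C`, and entries bounded by `K` (a bound of `⊤` means unbounded). -/
def tableCount {I J : Type*} [Fintype I] [Fintype J]
    (K : I → J → ℕ∞) (R : I → ℕ) (C : J → ℕ) : ℕ :=
  Set.ncard {A : I → J → ℕ |
    (∀ i, ∑ j, A i j = R i) ∧ (∀ j, ∑ i, A i j = C j) ∧ ∀ i j, (A i j : ℕ∞) ≤ K i j}

/-- The `s`-fold cloning of a margin vector. -/
def cloneVec {m : ℕ} (s : ℕ) (R : Fin m → ℕ) : Fin s × Fin m → ℕ :=
  fun p => s * R p.2

/-- The `s`-fold cloning of a bound matrix. -/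
def cloneMat {m n : ℕ} (s : ℕ) (K : Fin m → Fin n → ℕ∞) :
    Fin s × Fin m → Fin s × Fin n → ℕ∞ :=
  fun p q => K p.2 q.2

/-- The mean of the truncated geometric distribution on `{0,…,κ}` with ratio `q`. -/
def tgMean (κ : ℕ∞) (q : ℝ) : ℝ :=
  if κ = ⊤ then q / (1 - q)
  else (∑ t ∈ Finset.range (κ.toNat + 1), (t : ℝ) * q ^ t) /
    (∑ t ∈ Finset.range (κ.toNat + 1), q ^ t)

/-- The parameter `q(x;κ)` of the truncated geometric distribution `TG(x;κ)` with mean `x`. -/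
def tgQ (κ : ℕ∞) (x : ℝ) : ℝ := sInf {q : ℝ | 0 ≤ q ∧ x ≤ tgMean κ q}

/-- The parameter `p(x;κ)` of the truncated geometric distribution `TG(x;κ)` with mean `x`. -/
def tgP (κ : ℕ∞) (x : ℝ) : ℝ :=
  if κ = ⊤ then 1 - tgQ κ x
  else (∑ t ∈ Finset.range (κ.toNat + 1), tgQ κ x ^ t)⁻¹

/-- The probability mass function of `TG(x;κ)`: `Pr[X=t] = p q^t` for `t ∈ {0,…,κ}`. -/
def tgPMF (κ : ℕ∞) (x : ℝ) (t : ℕ) : ℝ :=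
  if (t : ℕ∞) ≤ κ then tgP κ x * tgQ κ x ^ t else 0

/-- `H^max_κ(x)`: the (base-e) entropy of the truncated geometric distribution `TG(x;κ)`. -/
def Hmax (κ : ℕ∞) (x : ℝ) : ℝ := -∑' t : ℕ, tgPMF κ x t * Real.log (tgPMF κ x t)

/-- The `(κ+1)`-nomial coefficient `(n choose r)_κ`: the coefficient of `x^r` in
`(1+x+⋯+x^κ)^n`; for `κ = ∞` it is `(r+n-1).choose r`. -/
def knomial (κ : ℕ∞) (n r : ℕ) : ℕ :=
  if κ = ⊤ then (r + n - 1).choose r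
  else ((∑ t ∈ Finset.range (κ.toNat + 1), (Polynomial.X : Polynomial ℕ) ^ t) ^ n).coeff r

/-- The independence-heuristic estimate `I_κ(R,C)`. -/
def indepEst (κ : ℕ∞) {I J : Type*} [Fintype I] [Fintype J] (R : I → ℕ) (C : J → ℕ) : ℝ :=
  ((knomial κ (Fintype.card I * Fintype.card J) (∑ i, R i) : ℝ))⁻¹ *
    (∏ i, (knomial κ (Fintype.card J) (R i) : ℝ)) *
    ∏ j, (knomial κ (Fintype.card I) (C j) : ℝ)

/-- The transportation polytope `Π_κ(R,C)` of real matrices with entries in `[0,κ]`,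
row sums `R` and column sums `C`. -/
def transportPolytope (κ : ℕ∞) {m n : ℕ} (R : Fin m → ℕ) (C : Fin n → ℕ) :
    Set (Fin m → Fin n → ℝ) :=
  {Z | (∀ i j, 0 ≤ Z i j) ∧ (∀ i j, κ ≠ ⊤ → Z i j ≤ (κ.toNat : ℝ)) ∧
    (∀ i, ∑ j, Z i j = (R i : ℝ)) ∧ ∀ j, ∑ i, Z i j = (C j : ℝ)}

/-- The generating function `G(x,y) = ∏_{i,j} (1 + x_i y_j + ⋯ + (x_i y_j)^{k_{ij}})`. -/
def genFun {m n : ℕ} (K : Fin m → Fin n → ℕ) (x : Fin m → ℝ) (y : Fin n → ℝ) : ℝ :=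
  ∏ i, ∏ j, ∑ t ∈ Finset.range (K i j + 1), (x i * y j) ^ t

/-- The monomial `x^R = ∏_i x_i^{r_i}`. -/
def monom {m : ℕ} (x : Fin m → ℝ) (R : Fin m → ℕ) : ℝ := ∏ i, x i ^ R i

/-- The concave roof function `f_K(R,C)`: the supremum of `∑_t α_t ln T_K(R^t,C^t)` over
convex combinations of integer margins averaging to `(R,C)` (and `⊥ = -∞` if none exist). -/
def fK {m n : ℕ} (K : Fin m → Fin n → ℕ) (R : Fin m → ℝ) (C : Fin n → ℝ) : EReal :=
  sSup {v : EReal | ∃ (p : ℕ) (α : Fin p → ℝ)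
    (Rs : Fin p → Fin m → ℕ) (Cs : Fin p → Fin n → ℕ),
    1 ≤ p ∧ (∀ t, 0 ≤ α t) ∧ ∑ t, α t = 1 ∧
    (∀ i, ∑ t, α t * (Rs t i : ℝ) = R i) ∧ (∀ j, ∑ t, α t * (Cs t j : ℝ) = C j) ∧
    (∀ t, 0 < tableCount (fun i j => (K i j : ℕ∞)) (Rs t) (Cs t)) ∧
    v = ((∑ t, α t * Real.log (tableCount (fun i j => (K i j : ℕ∞)) (Rs t) (Cs t)) : ℝ) : EReal)}

/-- `e^x` for an extended real `x`, with `e^{-∞} = 0`. -/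
def expE (e : EReal) : ℝ := if e = ⊥ then 0 else Real.exp e.toReal

end

/-- The bilinear form on `ℝ^S` with matrix `M`. -/
def matForm {ι : Type*} (S : Finset ι) (M : ι → ι → ℝ) (v w : ι → ℝ) : ℝ :=
  ∑ i ∈ S, ∑ j ∈ S, v i * w j * M i j

/-- A symmetric form that is nonpositive on the kernel of a linear functional satisfies the
reverse Cauchy–Schwarz inequality. -/
lemma matForm_reverse_cauchySchwarz {ι : Type*} (S : Finset ι) (M : ι → ι → ℝ)
    (hM : ∀ i j, M i j = M j i) (l : ι → ℝ)
    (h : ∀ v : ι → ℝ, ∑ i ∈ S, v i * l i = 0 → matForm S M v v ≤ 0)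
    (v w : ι → ℝ) (hw : 0 ≤ matForm S M w w) :
    matForm S M v v * matForm S M w w ≤ matForm S M v w ^ 2 := by
  rcases hw.eq_or_lt with hw | hw
  · rw [← hw]; nlinarith [sq_nonneg (matForm S M v w)]
  set X := ∑ i ∈ S, w i * l i with hX
  set Y := ∑ i ∈ S, v i * l i with hY
  have hX0 : X ≠ 0 := fun h0 => absurd (h w h0) (not_le.2 hw)
  have hz := h (fun i => X * v i - Y * w i) (by
    have : ∑ i ∈ S, (X * v i - Y * w i) * l i = X * Y - Y * X := by
      rw [hX, hY, Finset.mul_sum, Finset.mul_sum, ← Finset.sum_sub_distrib]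
      refine Finset.sum_congr rfl fun i _ => ?_
      ring
    rw [this]; ring)
  have hsymm : matForm S M w v = matForm S M v w := by
    unfold matForm
    rw [Finset.sum_comm]
    refine Finset.sum_congr rfl fun i _ => Finset.sum_congr rfl fun j _ => ?_
    rw [hM]; ring
  have hexp : matForm S M (fun i => X * v i - Y * w i) (fun i => X * v i - Y * w i) =
      X ^ 2 * matForm S M v v - X * Y * matForm S M v w - X * Y * matForm S M w v +
        Y ^ 2 * matForm S M w w := by
    simp only [matForm, Finset.mul_sum, ← Finset.sum_sub_distrib, ← Finset.sum_add_distrib]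
    refine Finset.sum_congr rfl fun i _ => Finset.sum_congr rfl fun j _ => ?_
    ring
  rw [hexp, hsymm] at hz
  set V := matForm S M v v
  set W := matForm S M w w
  set Z := matForm S M v w
  have h1 : (Y * W - X * Z) ^ 2 + X ^ 2 * (V * W - Z ^ 2) ≤ 0 := by nlinarith
  have h2 : X ^ 2 * (V * W - Z ^ 2) ≤ 0 := by nlinarith [sq_nonneg (Y * W - X * Z)]
  have h3 : 0 < X ^ 2 := by positivity
  nlinarith [nonpos_of_mul_nonpos_right h2 h3]

/-- A discrete Prékopa inequality along a chain of local quadratic inequalities. -/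
lemma chain_sum_mul_sum_le {n : ℕ} (p q s : ℕ → ℝ) (hp : ∀ a ≤ n + 2, 0 < p a)
    (h : ∀ a ≤ n, ∀ x y : ℝ,
      x * (x * p (a + 2) + y * p (a + 1) + q (a + 1)) + y * (x * p (a + 1) + y * p a + q a) +
        x * q (a + 1) + y * q a + s a ≤
      (x * p (a + 2) + y * p (a + 1) + q (a + 1)) ^ 2 / p (a + 2) +
        (x * p (a + 1) + y * p a + q a) ^ 2 / p a) :
    (∑ a ∈ range (n + 3), p a) * (∑ a ∈ range (n + 1), s a) ≤
      (∑ a ∈ range (n + 2), q a) ^ 2 := by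
  set A := ∑ a ∈ range (n + 3), p a with hA
  set B := ∑ a ∈ range (n + 2), q a with hB
  have hA0 : 0 < A := Finset.sum_pos (fun a ha => hp a (by simp at ha; omega)) (by simp)
  obtain ⟨τ, hτ⟩ : ∃ τ : ℝ, B + τ * A = 0 := ⟨-B / A, by field_simp; ring⟩
  set ξ : ℕ → ℝ := fun a => -(∑ b ∈ range a, (q b + τ * p b)) / p a with hξ
  have hξ0 : ξ 0 = 0 := by simp [hξ]
  have hmul : ∀ a ≤ n + 2, ξ a * p a = -(∑ b ∈ range a, (q b + τ * p b)) := by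
    intro a ha
    have := (hp a ha).ne'
    simp only [hξ]; field_simp
  have hrec : ∀ a ≤ n + 1, q a = -(ξ (a + 1) * p (a + 1)) - (τ - ξ a) * p a := by
    intro a ha
    have h1 := hmul a (by omega)
    have h2 := hmul (a + 1) (by omega)
    rw [Finset.sum_range_succ] at h2
    linarith
  have hξn : ξ (n + 2) = τ := by
    have h1 := hmul (n + 2) le_rfl
    rw [Finset.sum_add_distrib, ← Finset.mul_sum, ← hB] at h1
    rw [hA, Finset.sum_range_succ] at hτ
    have : ξ (n + 2) * p (n + 2) = τ * p (n + 2) := by linarith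
    exact mul_right_cancel₀ (hp _ le_rfl).ne' this
  set U : ℕ → ℝ := fun b => (ξ b - ξ (b + 1)) ^ 2 * p (b + 1) -
    ξ b * (ξ b - ξ (b + 1)) * p (b + 1) - ξ b * q b with hU
  set W : ℕ → ℝ := fun b => (ξ b - ξ (b + 1)) ^ 2 * p b -
    (τ - ξ (b + 1)) * (ξ b - ξ (b + 1)) * p b - (τ - ξ (b + 1)) * q b with hW
  have hs : ∀ a ∈ range (n + 1), s a ≤ U (a + 1) + W a := by
    intro a ha
    have ha' : a ≤ n := by simp at ha; omega
    have h1 := h a ha' (ξ (a + 1)) (τ - ξ (a + 1))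
    have e1 : ξ (a + 1) * p (a + 2) + (τ - ξ (a + 1)) * p (a + 1) + q (a + 1) =
        (ξ (a + 1) - ξ (a + 2)) * p (a + 2) := by
      rw [hrec (a + 1) (by omega)]; ring
    have e2 : ξ (a + 1) * p (a + 1) + (τ - ξ (a + 1)) * p a + q a =
        (ξ a - ξ (a + 1)) * p a := by
      rw [hrec a (by omega)]; ring
    have p2 := (hp (a + 2) (by omega)).ne'
    have p0 := (hp a (by omega)).ne'
    have e3 : ((ξ (a + 1) - ξ (a + 2)) * p (a + 2)) ^ 2 / p (a + 2) =
        (ξ (a + 1) - ξ (a + 2)) ^ 2 * p (a + 2) := by field_simp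
    have e4 : ((ξ a - ξ (a + 1)) * p a) ^ 2 / p a = (ξ a - ξ (a + 1)) ^ 2 * p a := by
      field_simp
    rw [e1, e2, e3, e4] at h1
    simp only [hU, hW]
    linarith
  have hsum : ∑ a ∈ range (n + 1), (U (a + 1) + W a) ≤ -τ * B := by
    have e : ∀ b ∈ range (n + 2), U b + W b = -τ * q b := by
      intro b hb
      have hb' : b ≤ n + 1 := by simp at hb; omega
      simp only [hU, hW]
      rw [hrec b hb']; ring
    have e' : ∑ b ∈ range (n + 2), (U b + W b) = -τ * B := by
      rw [Finset.sum_congr rfl e, ← Finset.mul_sum]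
    have hU0 : 0 ≤ U 0 := by
      have := (hp 1 (by omega)).le
      simp only [hU, hξ0]
      simp only [zero_mul, sub_zero, zero_sub]
      positivity
    have hWn : 0 ≤ W (n + 1) := by
      have := (hp (n + 1) (by omega)).le
      simp only [hW, hξn]
      simp only [sub_self, zero_mul, sub_zero]
      positivity
    rw [Finset.sum_add_distrib] at e' ⊢
    rw [Finset.sum_range_succ' U, Finset.sum_range_succ W] at e'
    linarith
  have hfin : ∑ a ∈ range (n + 1), s a ≤ -τ * B := (Finset.sum_le_sum hs).trans hsum
  have hB' : B = -(τ * A) := by linarith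
  calc A * _ ≤ A * (-τ * B) := by gcongr
    _ = B ^ 2 := by rw [hB']; ring

/-- Every second-order difference form of `f` at a point of total degree `N` supported on `S`
satisfies the reverse Cauchy–Schwarz inequality. -/
def IsLorentzianOn {ι : Type*} [DecidableEq ι] (S : Finset ι) (N : ℕ) (f : (ι → ℕ) → ℝ) : Prop :=
  ∀ α ∈ S.piAntidiag N, ∀ v w : ι → ℝ, (∀ i, 0 ≤ w i) →
    matForm S (fun i j => f (α + Pi.single i 1 + Pi.single j 1)) v v *
      matForm S (fun i j => f (α + Pi.single i 1 + Pi.single j 1)) w w ≤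
    matForm S (fun i j => f (α + Pi.single i 1 + Pi.single j 1)) v w ^ 2

/-- Identify the variable `i₁` with `i₀`. -/
def mergeVar {ι : Type*} [DecidableEq ι] (i₀ i₁ : ι) (f : (ι → ℕ) → ℝ) (c : ι → ℕ) : ℝ :=
  ∑ x ∈ antidiagonal (c i₀), f (Function.update (Function.update c i₀ x.1) i₁ x.2)

lemma matForm_nonneg {ι : Type*} {S : Finset ι} {M : ι → ι → ℝ} {w : ι → ℝ}
    (hM : ∀ i ∈ S, ∀ j ∈ S, 0 ≤ M i j) (hw : ∀ i, 0 ≤ w i) : 0 ≤ matForm S M w w :=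
  Finset.sum_nonneg fun i hi => Finset.sum_nonneg fun j hj =>
    mul_nonneg (mul_nonneg (hw i) (hw j)) (hM i hi j hj)

lemma matForm_insert {ι : Type*} [DecidableEq ι] {T : Finset ι} {i : ι} (hi : i ∉ T)
    (M : ι → ι → ℝ) (hM : ∀ i j, M i j = M j i) (v w : ι → ℝ) :
    matForm (insert i T) M v w = v i * w i * M i i + v i * ∑ j ∈ T, w j * M i j +
      w i * ∑ j ∈ T, v j * M i j + matForm T M v w := by
  simp only [matForm, Finset.sum_insert hi, Finset.sum_add_distrib, Finset.mul_sum]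
  have h1 : ∀ j, v j * w i * M j i = w i * (v j * M i j) := fun j => by rw [hM]; ring
  have h2 : ∀ j, v i * w j * M i j = v i * (w j * M i j) := fun j => by ring
  simp only [h1, h2]
  ring

lemma matForm_congr {ι : Type*} {S : Finset ι} {M : ι → ι → ℝ} {v v' w w' : ι → ℝ}
    (hv : ∀ i ∈ S, v i = v' i) (hw : ∀ i ∈ S, w i = w' i) :
    matForm S M v w = matForm S M v' w' :=
  Finset.sum_congr rfl fun i hi => Finset.sum_congr rfl fun j hj => by rw [hv i hi, hw j hj]

/-- A quadratic bound extracted from a reverse Cauchy–Schwarz inequality. -/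
lemma le_sq_div_add_sq_div {E L₁ L₂ p₀ p₁ p₂ : ℝ} (h₀ : 0 < p₀) (h₁ : 0 < p₁) (h₂ : 0 < p₂)
    (h : ∀ x y : ℝ, 0 ≤ x → 0 ≤ y →
      E * (x ^ 2 * p₂ + 2 * (x * y) * p₁ + y ^ 2 * p₀) ≤ (x * L₁ + y * L₂) ^ 2) :
    E ≤ L₁ ^ 2 / p₂ + L₂ ^ 2 / p₀ := by
  by_contra! hE
  set X := L₁ ^ 2 / p₂ + L₂ ^ 2 / p₀ with hX
  have hX0 : 0 ≤ X := by positivity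
  rcases hX0.eq_or_lt with hX0 | hX0
  · have a1 : 0 ≤ L₁ ^ 2 / p₂ := by positivity
    have a2 : 0 ≤ L₂ ^ 2 / p₀ := by positivity
    have b1 : L₁ = 0 := by
      have : L₁ ^ 2 / p₂ = 0 := by linarith
      simpa [h₂.ne'] using this
    have b2 : L₂ = 0 := by
      have : L₂ ^ 2 / p₀ = 0 := by linarith
      simpa [h₀.ne'] using this
    have := h 1 1 zero_le_one zero_le_one
    rw [b1, b2] at this
    nlinarith [mul_pos (hX0.trans_lt hE) (show 0 < p₂ + 2 * p₁ + p₀ by positivity)]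
  · have h3 := h (|L₁| / p₂) (|L₂| / p₀) (by positivity) (by positivity)
    have e1 : (|L₁| / p₂) ^ 2 * p₂ + (|L₂| / p₀) ^ 2 * p₀ = X := by
      rw [hX, div_pow, div_pow, sq_abs, sq_abs]; field_simp
    have e2 : 0 ≤ 2 * (|L₁| / p₂ * (|L₂| / p₀)) * p₁ := by positivity
    have e3 : |(|L₁| / p₂ * L₁ + |L₂| / p₀ * L₂)| ≤ X := by
      refine (abs_add_le _ _).trans (le_of_eq ?_)
      rw [abs_mul, abs_mul, abs_div, abs_div, abs_abs, abs_abs, abs_of_pos h₂, abs_of_pos h₀, hX,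
        ← sq_abs L₁, ← sq_abs L₂]
      ring
    have e4 := sq_le_sq' (by linarith [neg_abs_le X, abs_of_pos hX0, neg_le_of_abs_le e3])
      (le_of_abs_le e3)
    have e5 : E * X ≤ X ^ 2 := by
      have : E * X ≤ E * ((|L₁| / p₂) ^ 2 * p₂ + 2 * (|L₁| / p₂ * (|L₂| / p₀)) * p₁ +
          (|L₂| / p₀) ^ 2 * p₀) := by
        apply mul_le_mul_of_nonneg_left _ (hX0.trans hE).le
        linarith
      linarith
    nlinarith

lemma add_single_comm {ι : Type*} [DecidableEq ι] (α : ι → ℕ) (i j : ι) :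
    α + Pi.single i 1 + Pi.single j 1 = α + Pi.single j 1 + Pi.single i 1 := by
  rw [add_assoc, add_assoc, add_comm (Pi.single i 1)]

lemma update_update_mem_piAntidiag {ι : Type*} [DecidableEq ι] {T : Finset ι} {i₀ i₁ : ι}
    (h01 : i₀ ≠ i₁) (h0 : i₀ ∉ T) (h1 : i₁ ∉ T) {N : ℕ} {γ : ι → ℕ}
    (hγ : γ ∈ (insert i₀ T).piAntidiag N) {a b k : ℕ} (hab : a + b = γ i₀ + k) :
    Function.update (Function.update γ i₀ a) i₁ b ∈
      (insert i₁ (insert i₀ T)).piAntidiag (N + k) := by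
  rw [mem_piAntidiag] at hγ ⊢
  obtain ⟨hsum, hsupp⟩ := hγ
  constructor
  · rw [Finset.sum_insert (by simp [h01.symm, h1]), Finset.sum_insert h0]
    rw [Finset.sum_insert h0] at hsum
    have : ∑ x ∈ T, Function.update (Function.update γ i₀ a) i₁ b x = ∑ x ∈ T, γ x := by
      refine Finset.sum_congr rfl fun x hx => ?_
      have a1 : x ≠ i₀ := fun h => h0 (h ▸ hx)
      have a2 : x ≠ i₁ := fun h => h1 (h ▸ hx)
      simp [a1, a2]
    rw [this]
    simp only [Function.update_apply, h01, if_true, if_false]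
    omega
  · intro i hi
    by_cases a1 : i = i₁
    · simp [a1]
    by_cases a2 : i = i₀
    · simp [a2]
    exact Finset.mem_insert_of_mem (hsupp i (by simpa [a1, a2] using hi))

lemma add_single_add_single_mem_piAntidiag {ι : Type*} [DecidableEq ι] {S : Finset ι} {N : ℕ}
    {β : ι → ℕ} (hβ : β ∈ S.piAntidiag N) {i j : ι} (hi : i ∈ S) (hj : j ∈ S) :
    β + Pi.single i 1 + Pi.single j 1 ∈ S.piAntidiag (N + 2) := by
  rw [mem_piAntidiag] at hβ ⊢
  constructor
  · simp only [Pi.add_apply, Finset.sum_add_distrib, hβ.1]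
    rw [Finset.sum_pi_single', Finset.sum_pi_single', if_pos hi, if_pos hj]
  · intro k hk
    by_cases b1 : k = i
    · exact b1 ▸ hi
    by_cases b2 : k = j
    · exact b2 ▸ hj
    exact hβ.2 k (by simpa [b1, b2] using hk)

lemma mergeVar_pos {ι : Type*} [DecidableEq ι] {T : Finset ι} {i₀ i₁ : ι}
    (h01 : i₀ ≠ i₁) (h0 : i₀ ∉ T) (h1 : i₁ ∉ T) {N : ℕ} {f : (ι → ℕ) → ℝ}
    (hpos : ∀ α ∈ (insert i₁ (insert i₀ T)).piAntidiag N, 0 < f α) :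
    ∀ γ ∈ (insert i₀ T).piAntidiag N, 0 < mergeVar i₀ i₁ f γ := fun γ hγ =>
  Finset.sum_pos (fun x hx => hpos _ (update_update_mem_piAntidiag (k := 0) h01 h0 h1 hγ
    (by simpa using hx))) ⟨(γ i₀, 0), by simp⟩

lemma update_update_congr {ι : Type*} [DecidableEq ι] {i₀ i₁ : ι} {γ δ : ι → ℕ}
    (h : ∀ k, k ≠ i₀ → k ≠ i₁ → γ k = δ k) (a b : ℕ) :
    Function.update (Function.update γ i₀ a) i₁ b =
      Function.update (Function.update δ i₀ a) i₁ b := by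
  ext k
  by_cases h1 : k = i₁
  · simp [h1]
  by_cases h0 : k = i₀
  · subst h0; simp [h1]
  simp [h0, h1, h k h0 h1]

lemma update_update_add_single {ι : Type*} [DecidableEq ι] {i₀ i₁ j : ι}
    (h0 : j ≠ i₀) (h1 : j ≠ i₁) (γ : ι → ℕ) (a b : ℕ) :
    Function.update (Function.update γ i₀ a) i₁ b + Pi.single j 1 =
      Function.update (Function.update (γ + Pi.single j 1) i₀ a) i₁ b := by
  ext k
  by_cases h1' : k = i₁
  · subst h1'; simp [h1.symm]
  by_cases h0' : k = i₀
  · subst h0'; simp [h1', h0.symm]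
  simp [h0', h1']

lemma mergeVar_isLorentzianOn {ι : Type*} [DecidableEq ι] {T : Finset ι} {i₀ i₁ : ι}
    (h01 : i₀ ≠ i₁) (h0 : i₀ ∉ T) (h1 : i₁ ∉ T) {N : ℕ} {f : (ι → ℕ) → ℝ}
    (hpos : ∀ α ∈ (insert i₁ (insert i₀ T)).piAntidiag (N + 2), 0 < f α)
    (hf : IsLorentzianOn (insert i₁ (insert i₀ T)) N f) :
    IsLorentzianOn (insert i₀ T) N (mergeVar i₀ i₁ f) := by
  intro α hα v w hw
  have hα1 : α i₁ = 0 := by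
    by_contra h
    have := (mem_piAntidiag.1 hα).2 _ h
    simp [h01.symm, h1] at this
  set n := α i₀ with hn
  set P : ℕ → ℕ → ι → ℕ := fun a b => Function.update (Function.update α i₀ a) i₁ b with hP
  have hP0 : ∀ a b, P a b + Pi.single i₀ 1 = P (a + 1) b := by
    intro a b; ext k
    simp only [hP, Pi.add_apply, Function.update_apply, Pi.single_apply]
    split_ifs <;> simp_all
  have hP1 : ∀ a b, P a b + Pi.single i₁ 1 = P a (b + 1) := by
    intro a b; ext k
    simp only [hP, Pi.add_apply, Function.update_apply, Pi.single_apply]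
    split_ifs <;> simp_all
  have hPmem : ∀ a b k, a + b = n + k →
      P a b ∈ (insert i₁ (insert i₀ T)).piAntidiag (N + k) := fun a b k hab =>
    update_update_mem_piAntidiag h01 h0 h1 hα hab
  have hmem2 : ∀ β ∈ (insert i₁ (insert i₀ T)).piAntidiag N,
      ∀ i ∈ insert i₁ (insert i₀ T), ∀ j ∈ insert i₁ (insert i₀ T),
      0 < f (β + Pi.single i 1 + Pi.single j 1) := fun β hβ i hi j hj =>
    hpos _ (add_single_add_single_mem_piAntidiag hβ hi hj)
  have hj0 : ∀ j ∈ T, j ≠ i₀ := fun j hj h => h0 (h ▸ hj)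
  have hj1 : ∀ j ∈ T, j ≠ i₁ := fun j hj h => h1 (h ▸ hj)
  set M : ι → ι → ℝ := fun i j => mergeVar i₀ i₁ f (α + Pi.single i 1 + Pi.single j 1) with hM
  have hMsymm : ∀ i j, M i j = M j i := fun i j => by
    simp only [hM]; rw [add_single_comm]
  have hM00 : M i₀ i₀ = ∑ a ∈ range (n + 3), f (P a (n + 2 - a)) := by
    simp only [hM, mergeVar]
    rw [Finset.Nat.sum_antidiagonal_eq_sum_range_succ_mk]
    have e : (α + Pi.single i₀ 1 + Pi.single i₀ 1 : ι → ℕ) i₀ = n + 2 := by simp [hn]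
    rw [e]
    refine Finset.sum_congr rfl fun a _ => ?_
    exact congrArg f (update_update_congr (fun k b0 _ => by simp [b0]) _ _)
  have hM0j : ∀ j ∈ T, M i₀ j = ∑ a ∈ range (n + 2), f (P a (n + 1 - a) + Pi.single j 1) := by
    intro j hj
    simp only [hM, mergeVar]
    rw [Finset.Nat.sum_antidiagonal_eq_sum_range_succ_mk]
    have e : (α + Pi.single i₀ 1 + Pi.single j 1 : ι → ℕ) i₀ = n + 1 := by
      simp [hn, (hj0 j hj).symm]
    rw [e]
    refine Finset.sum_congr rfl fun a _ => ?_
    simp only [hP]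
    rw [update_update_add_single (hj0 j hj) (hj1 j hj)]
    exact congrArg f (update_update_congr (fun k b0 _ => by simp [b0]) _ _)
  have hMij : ∀ i ∈ T, ∀ j ∈ T,
      M i j = ∑ a ∈ range (n + 1), f (P a (n - a) + Pi.single i 1 + Pi.single j 1) := by
    intro i hi j hj
    simp only [hM, mergeVar]
    rw [Finset.Nat.sum_antidiagonal_eq_sum_range_succ_mk]
    have e : (α + Pi.single i 1 + Pi.single j 1 : ι → ℕ) i₀ = n := by
      simp [hn, (hj0 j hj).symm, (hj0 i hi).symm]
    rw [e]
    refine Finset.sum_congr rfl fun a _ => ?_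
    simp only [hP]
    rw [update_update_add_single (hj0 i hi) (hj1 i hi),
      update_update_add_single (hj0 j hj) (hj1 j hj)]
  have hMpos : ∀ i ∈ insert i₀ T, ∀ j ∈ insert i₀ T, 0 < M i j := fun i hi j hj =>
    mergeVar_pos h01 h0 h1 hpos _ (add_single_add_single_mem_piAntidiag hα hi hj)
  have hA0 : 0 < M i₀ i₀ := hMpos _ (by simp) _ (by simp)
  refine matForm_reverse_cauchySchwarz (insert i₀ T) M hMsymm (M i₀) ?_ v w
    (matForm_nonneg (fun i hi j hj => (hMpos i hi j hj).le) hw)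
  clear v w hw
  intro v hv
  have hchain := chain_sum_mul_sum_le (n := n) (fun a => f (P a (n + 2 - a)))
    (fun a => ∑ j ∈ T, v j * f (P a (n + 1 - a) + Pi.single j 1))
    (fun a => matForm T (fun i j => f (P a (n - a) + Pi.single i 1 + Pi.single j 1)) v v) ?_ ?_
  · have e1 : ∑ a ∈ range (n + 2), ∑ j ∈ T, v j * f (P a (n + 1 - a) + Pi.single j 1) =
        ∑ j ∈ T, v j * M i₀ j := by
      rw [Finset.sum_comm]
      refine Finset.sum_congr rfl fun j hj => ?_
      rw [hM0j j hj, Finset.mul_sum]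
    have e2 : ∑ a ∈ range (n + 1),
        matForm T (fun i j => f (P a (n - a) + Pi.single i 1 + Pi.single j 1)) v v =
        matForm T M v v := by
      unfold matForm
      rw [Finset.sum_comm]
      refine Finset.sum_congr rfl fun i hi => ?_
      rw [Finset.sum_comm]
      refine Finset.sum_congr rfl fun j hj => ?_
      rw [hMij i hi j hj, Finset.mul_sum]
    rw [e1, e2, ← hM00] at hchain
    rw [Finset.sum_insert h0] at hv
    rw [matForm_insert h0 M hMsymm]
    set A := M i₀ i₀
    set B := ∑ j ∈ T, v j * M i₀ j
    set C := matForm T M v v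
    set t := v i₀
    have hB : B = -(t * A) := by linarith
    have : A * (t * t * A + t * B + t * B + C) ≤ 0 := by rw [hB] at hchain ⊢; nlinarith
    exact nonpos_of_mul_nonpos_right this hA0
  · intro a ha
    exact hpos _ (hPmem _ _ 2 (by omega))
  · intro a ha x y
    set β := P a (n - a) with hβ
    have hβm : β ∈ (insert i₁ (insert i₀ T)).piAntidiag N := hPmem _ _ 0 (by omega)
    have E0 : P (a + 2) (n + 2 - (a + 2)) = β + Pi.single i₀ 1 + Pi.single i₀ 1 := by
      rw [hβ, hP0, hP0]; congr 1; omega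
    have E1 : P (a + 1) (n + 2 - (a + 1)) = β + Pi.single i₁ 1 + Pi.single i₀ 1 := by
      rw [hβ, hP1, hP0]; congr 1; omega
    have E2 : P a (n + 2 - a) = β + Pi.single i₁ 1 + Pi.single i₁ 1 := by
      rw [hβ, hP1, hP1]; congr 1; omega
    have E3 : P (a + 1) (n + 1 - (a + 1)) = β + Pi.single i₀ 1 := by
      rw [hβ, hP0]; congr 1; omega
    have E4 : P a (n + 1 - a) = β + Pi.single i₁ 1 := by
      rw [hβ, hP1]; congr 1; omega
    simp only [E0, E1, E2, E3, E4]
    refine le_sq_div_add_sq_div (p₁ := f (β + Pi.single i₁ 1 + Pi.single i₀ 1))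
      (hmem2 β hβm _ (by simp) _ (by simp)) (hmem2 β hβm _ (by simp) _ (by simp))
      (hmem2 β hβm _ (by simp) _ (by simp)) ?_
    intro s t hs ht
    set D : ι → ι → ℝ := fun i j => f (β + Pi.single i 1 + Pi.single j 1) with hD
    have hDs : ∀ i j, D i j = D j i := fun i j => by
      simp only [hD]; rw [add_single_comm]
    set v' : ι → ℝ := fun i => if i = i₀ then x else if i = i₁ then y else v i with hv'
    set w' : ι → ℝ := fun i => if i = i₀ then s else if i = i₁ then t else 0 with hw'
    have key := hf β hβm v' w' (by intro i; simp only [hw']; split_ifs <;> simp [hs, ht])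
    change matForm _ D _ _ * matForm _ D _ _ ≤ matForm _ D _ _ ^ 2 at key
    have hi1 : i₁ ∉ insert i₀ T := by simp [h01.symm, h1]
    have v0 : v' i₀ = x := by simp [hv']
    have v1 : v' i₁ = y := by simp [hv', h01.symm]
    have w0 : w' i₀ = s := by simp [hw']
    have w1 : w' i₁ = t := by simp [hw', h01.symm]
    have vj : ∀ j ∈ T, v' j = v j := fun j hj => by simp [hv', hj0 j hj, hj1 j hj]
    have wj : ∀ j ∈ T, w' j = 0 := fun j hj => by simp [hw', hj0 j hj, hj1 j hj]
    simp only [matForm_insert hi1 D hDs, matForm_insert h0 D hDs, Finset.sum_insert h0,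
      v0, v1, w0, w1] at key
    have s1 : ∀ g : ι → ℝ, ∑ j ∈ T, v' j * g j = ∑ j ∈ T, v j * g j := fun g =>
      Finset.sum_congr rfl fun j hj => by rw [vj j hj]
    have s2 : ∀ g : ι → ℝ, ∑ j ∈ T, w' j * g j = 0 := fun g =>
      Finset.sum_eq_zero fun j hj => by rw [wj j hj, zero_mul]
    have s3 : matForm T D v' v' = matForm T D v v := matForm_congr vj vj
    have s4 : matForm T D v' w' = 0 := Finset.sum_eq_zero fun i _ => Finset.sum_eq_zero
      fun j hj => by rw [wj j hj]; ring
    have s5 : matForm T D w' w' = 0 := Finset.sum_eq_zero fun i _ => Finset.sum_eq_zero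
      fun j hj => by rw [wj j hj]; ring
    simp only [s1 (D i₀), s1 (D i₁), s2, s3, s4, s5] at key
    simp only [hD] at key ⊢
    rw [show (β + Pi.single i₁ 1 + Pi.single i₀ 1) = β + Pi.single i₀ 1 + Pi.single i₁ 1 from
      add_single_comm _ _ _] at key ⊢
    refine le_trans (le_of_eq ?_) (key.trans (le_of_eq ?_)) <;> ring

/-- The vector of sums of `a` over the fibres of `φ` in `S`. -/
def fiberSum {ι κ : Type*} [DecidableEq κ] (S : Finset ι) (φ : ι → κ) (a : ι → ℕ) : κ → ℕ :=
  fun k => ∑ i ∈ S with φ i = k, a i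

/-- The coefficients obtained by identifying all variables with the same image under `φ`. -/
def pushCoeff {ι κ : Type*} [DecidableEq ι] [DecidableEq κ] [Fintype κ] (S : Finset ι) (N : ℕ)
    (f : (ι → ℕ) → ℝ) (φ : ι → κ) (c : κ → ℕ) : ℝ :=
  ∑ a ∈ S.piAntidiag N with fiberSum S φ a = c, f a

lemma fiberSum_add {ι κ : Type*} [DecidableEq κ] (S : Finset ι) (φ : ι → κ) (a b : ι → ℕ) :
    fiberSum S φ (a + b) = fiberSum S φ a + fiberSum S φ b := by
  ext k; simp [fiberSum, Finset.sum_add_distrib]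

lemma fiberSum_single {ι κ : Type*} [DecidableEq ι] [DecidableEq κ] {S : Finset ι} (φ : ι → κ)
    {i : ι} (hi : i ∈ S) : fiberSum S φ (Pi.single i 1) = Pi.single (φ i) 1 := by
  ext k
  simp only [fiberSum, Finset.sum_pi_single', Finset.mem_filter, hi, true_and]
  simp only [Pi.single_apply, eq_comm]

lemma pushCoeff_mergeVar {ι κ : Type*} [DecidableEq ι] [DecidableEq κ] [Fintype κ]
    {T : Finset ι} {i₀ i₁ : ι} (h01 : i₀ ≠ i₁) (h0 : i₀ ∉ T) (h1 : i₁ ∉ T) (N : ℕ)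
    (f : (ι → ℕ) → ℝ) (φ : ι → κ) (hφ : φ i₀ = φ i₁) (c : κ → ℕ) :
    pushCoeff (insert i₁ (insert i₀ T)) N f φ c =
      pushCoeff (insert i₀ T) N (mergeVar i₀ i₁ f) φ c := by
  have h10 : i₁ ∉ insert i₀ T := by simp [h01.symm, h1]
  have hT0 : ∀ k ∈ T, k ≠ i₀ := fun k hk h => h0 (h ▸ hk)
  have hT1 : ∀ k ∈ T, k ≠ i₁ := fun k hk h => h1 (h ▸ hk)
  have hfib : ∀ a b : ι → ℕ, (∀ k ∈ T, a k = b k) → a i₀ + a i₁ = b i₀ →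
      fiberSum (insert i₁ (insert i₀ T)) φ a = fiberSum (insert i₀ T) φ b := by
    intro a b hab h
    ext k
    simp only [fiberSum, Finset.sum_filter]
    rw [Finset.sum_insert h10, Finset.sum_insert h0, Finset.sum_insert h0,
      Finset.sum_congr rfl fun x hx => by rw [hab x hx], ← hφ]
    split_ifs <;> omega
  unfold pushCoeff mergeVar
  rw [Finset.sum_sigma']
  symm
  refine Finset.sum_bij'
    (fun p _ => Function.update (Function.update p.1 i₀ p.2.1) i₁ p.2.2)
    (fun a _ => ⟨Function.update (Function.update a i₀ (a i₀ + a i₁)) i₁ 0, (a i₀, a i₁)⟩)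
    ?_ ?_ ?_ ?_ ?_
  · rintro ⟨γ, x⟩ h
    simp only [Finset.mem_sigma, Finset.mem_filter, Finset.HasAntidiagonal.mem_antidiagonal] at h ⊢
    refine ⟨update_update_mem_piAntidiag (k := 0) h01 h0 h1 h.1.1 (by simpa using h.2), ?_⟩
    rw [← h.1.2]
    refine hfib _ _ (fun k hk => by simp [hT0 k hk, hT1 k hk]) ?_
    simpa [Function.update_apply, h01] using h.2
  · intro a h
    simp only [Finset.mem_sigma, Finset.mem_filter, Finset.HasAntidiagonal.mem_antidiagonal] at h ⊢
    refine ⟨⟨?_, ?_⟩, by simp [h01]⟩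
    · rw [mem_piAntidiag] at h ⊢
      obtain ⟨⟨h2, h3⟩, _⟩ := h
      rw [Finset.sum_insert h10, Finset.sum_insert h0] at h2
      refine ⟨?_, fun i hi => ?_⟩
      · have e : T.sum (Function.update (Function.update a i₀ (a i₀ + a i₁)) i₁ 0) = T.sum a :=
          Finset.sum_congr rfl fun k hk => by simp [hT0 k hk, hT1 k hk]
        rw [Finset.sum_insert h0, e]
        simp only [Function.update_apply, h01, if_true, if_false]
        have e' : ∑ x ∈ T, a x = T.sum a := rfl
        omega
      · by_cases a1 : i = i₁
        · simp [a1] at hi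
        by_cases a2 : i = i₀
        · simp [a2]
        exact (Finset.mem_insert.1 (h3 i (by simpa [a1, a2] using hi))).resolve_left a1
    · rw [← h.2]
      exact (hfib _ _ (fun k hk => by simp [hT0 k hk, hT1 k hk])
        (by simp [h01])).symm
  · rintro ⟨γ, x⟩ h
    simp only [Finset.mem_sigma, Finset.mem_filter, Finset.HasAntidiagonal.mem_antidiagonal] at h
    have hγ1 : γ i₁ = 0 := by
      by_contra hne
      exact h10 ((mem_piAntidiag.1 h.1.1).2 _ hne)
    refine Sigma.ext ?_ (heq_of_eq ?_)
    · ext k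
      by_cases a1 : k = i₁
      · subst a1; simp [hγ1]
      by_cases a2 : k = i₀
      · subst a2; simp [h01, h.2]
      · simp [a1, a2]
    · simp [h01]
  · intro a h
    ext k
    by_cases a1 : k = i₁
    · subst a1; simp
    by_cases a2 : k = i₀
    · subst a2; simp [h01]
    · simp [a1, a2]
  · rintro ⟨γ, x⟩ h
    rfl

lemma fiberSum_of_injOn {ι κ : Type*} [DecidableEq κ] {S : Finset ι} {φ : ι → κ}
    (hinj : Set.InjOn φ S) (a : ι → ℕ) {i : ι} (hi : i ∈ S) : fiberSum S φ a (φ i) = a i := by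
  classical
  unfold fiberSum
  have : S.filter (fun j => φ j = φ i) = {i} := by
    ext j
    simp only [Finset.mem_filter, Finset.mem_singleton]
    exact ⟨fun h => hinj h.1 hi h.2, by rintro rfl; exact ⟨hi, rfl⟩⟩
  rw [this, Finset.sum_singleton]

lemma pushCoeff_of_injOn {ι κ : Type*} [DecidableEq ι] [DecidableEq κ] [Fintype κ]
    {S : Finset ι} {φ : ι → κ} (hinj : Set.InjOn φ S) {N : ℕ} (f : (ι → ℕ) → ℝ) {a : ι → ℕ}
    (ha : a ∈ S.piAntidiag N) : pushCoeff S N f φ (fiberSum S φ a) = f a := by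
  unfold pushCoeff
  refine Finset.sum_eq_single_of_mem a (by simp [ha]) fun b hb hne => absurd ?_ hne
  rw [Finset.mem_filter] at hb
  ext i
  by_cases hi : i ∈ S
  · rw [← fiberSum_of_injOn hinj b hi, ← fiberSum_of_injOn hinj a hi, hb.2]
  · have h1 : a i = 0 := by
      by_contra h; exact hi ((mem_piAntidiag.1 ha).2 _ h)
    have h2 : b i = 0 := by
      by_contra h; exact hi ((mem_piAntidiag.1 hb.1).2 _ h)
    rw [h1, h2]

lemma IsLorentzianOn.mul_le_sq {ι : Type*} [DecidableEq ι] {S : Finset ι} {N : ℕ}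
    {f : (ι → ℕ) → ℝ} (hf : IsLorentzianOn S N f) {β : ι → ℕ} (hβ : β ∈ S.piAntidiag N)
    {i j : ι} (hi : i ∈ S) (hj : j ∈ S) :
    f (β + Pi.single i 1 + Pi.single i 1) * f (β + Pi.single j 1 + Pi.single j 1) ≤
      f (β + Pi.single i 1 + Pi.single j 1) ^ 2 := by
  have h := hf β hβ (Pi.single i 1) (Pi.single j 1) (fun k => by
    rw [Pi.single_apply]; split_ifs <;> norm_num)
  have e : ∀ (M : ι → ι → ℝ) (p q : ι), p ∈ S → q ∈ S →
      matForm S M (Pi.single p 1) (Pi.single q 1) = M p q := by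
    intro M p q hp hq
    unfold matForm
    rw [Finset.sum_eq_single_of_mem p hp, Finset.sum_eq_single_of_mem q hq]
    · simp
    · intro b _ hb; simp [hb]
    · intro b _ hb; simp [hb]
  rwa [e _ _ _ hi hi, e _ _ _ hj hj, e _ _ _ hi hj] at h

/-- Log-concavity of the coefficients obtained by identifying variables in a positive
Lorentzian system. -/
theorem pushCoeff_logConcave {ι κ : Type*} [DecidableEq ι] [DecidableEq κ] [Fintype κ]
    (φ : ι → κ) (N : ℕ) {k k' : κ} (hk : k ≠ k') (α : κ → ℕ) (S : Finset ι) (f : (ι → ℕ) → ℝ)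
    (hpos : ∀ a ∈ S.piAntidiag (N + 2), 0 < f a) (hf : IsLorentzianOn S N f) :
    pushCoeff S (N + 2) f φ (α + Pi.single k 1 + Pi.single k 1) *
      pushCoeff S (N + 2) f φ (α + Pi.single k' 1 + Pi.single k' 1) ≤
      pushCoeff S (N + 2) f φ (α + Pi.single k 1 + Pi.single k' 1) ^ 2 := by
  induction hS : S.card generalizing S f with
  | zero =>
    have : S = ∅ := Finset.card_eq_zero.1 hS
    subst this
    simp [pushCoeff]
  | succ s ih =>
    by_cases hinj : Set.InjOn φ S
    · have hzero : ∀ c : κ → ℕ, ∀ k ∉ S.image φ, 0 < c k → pushCoeff S (N + 2) f φ c = 0 := by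
        intro c k hk hc
        refine Finset.sum_eq_zero fun a ha => absurd (congrFun (Finset.mem_filter.1 ha).2 k) ?_
        have : fiberSum S φ a k = 0 := by
          unfold fiberSum
          rw [Finset.filter_eq_empty_iff.2 fun i hi h => hk (Finset.mem_image.2 ⟨i, hi, h⟩),
            Finset.sum_empty]
        omega
      by_cases h1 : k ∈ S.image φ
      swap
      · rw [hzero _ k h1 (by simp), zero_mul]; positivity
      by_cases h2 : k' ∈ S.image φ
      swap
      · rw [hzero (α + Pi.single k' 1 + Pi.single k' 1) k' h2 (by simp), mul_zero]; positivity
      obtain ⟨i, hi, rfl⟩ := Finset.mem_image.1 h1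
      obtain ⟨j, hj, rfl⟩ := Finset.mem_image.1 h2
      by_cases hne : ((S.piAntidiag (N + 2)).filter fun a => fiberSum S φ a =
          α + Pi.single (φ i) 1 + Pi.single (φ i) 1).Nonempty
      swap
      · rw [Finset.not_nonempty_iff_eq_empty] at hne
        rw [pushCoeff, hne, Finset.sum_empty, zero_mul]; positivity
      obtain ⟨a, ha⟩ := hne
      rw [Finset.mem_filter] at ha
      obtain ⟨ha, hfa⟩ := ha
      have hai : 2 ≤ a i := by
        rw [← fiberSum_of_injOn hinj a hi, hfa]; simp
      obtain ⟨β, rfl⟩ : ∃ β : ι → ℕ, a = β + Pi.single i 1 + Pi.single i 1 := by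
        refine ⟨Function.update a i (a i - 2), ?_⟩
        ext l
        by_cases hl : l = i
        · subst hl; simp; omega
        · simp [hl]
      rw [fiberSum_add, fiberSum_add, fiberSum_single φ hi] at hfa
      have hβα : fiberSum S φ β = α := add_right_cancel (add_right_cancel hfa)
      have hβ : β ∈ S.piAntidiag N := by
        rw [mem_piAntidiag] at ha ⊢
        refine ⟨?_, fun l hl => ha.2 l (by simp [hl])⟩
        have := ha.1
        simp only [Pi.add_apply, Finset.sum_add_distrib] at this
        rw [Finset.sum_pi_single', if_pos hi] at this
        have e : ∑ x ∈ S, β x = S.sum β := rfl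
        omega
      have hval : ∀ p ∈ S, ∀ q ∈ S, pushCoeff S (N + 2) f φ
          (α + Pi.single (φ p) 1 + Pi.single (φ q) 1) =
          f (β + Pi.single p 1 + Pi.single q 1) := by
        intro p hp q hq
        rw [← hβα, ← fiberSum_single φ hp, ← fiberSum_single φ hq, ← fiberSum_add,
          ← fiberSum_add]
        exact pushCoeff_of_injOn hinj f (add_single_add_single_mem_piAntidiag hβ hp hq)
      rw [hval i hi i hi, hval j hj j hj, hval i hi j hj]
      exact hf.mul_le_sq hβ hi hj
    · simp only [Set.InjOn, not_forall] at hinj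
      obtain ⟨i₀, hi₀, i₁, hi₁, hφ, h01⟩ := hinj
      have hSeq : S = insert i₁ (insert i₀ ((S.erase i₁).erase i₀)) := by
        rw [Finset.insert_erase (Finset.mem_erase.2 ⟨h01, hi₀⟩), Finset.insert_erase hi₁]
      set T := (S.erase i₁).erase i₀ with hTdef
      have h0 : i₀ ∉ T := by simp [hTdef]
      have h1 : i₁ ∉ T := by simp [hTdef]
      clear_value T
      subst hSeq
      simp only [pushCoeff_mergeVar h01 h0 h1 _ f φ hφ]
      refine ih _ _ (mergeVar_pos h01 h0 h1 hpos) (mergeVar_isLorentzianOn h01 h0 h1 hpos hf) ?_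
      rw [Finset.card_insert_of_notMem (by simp [Ne.symm h01, h1])] at hS
      omega

/-- A Gaussian penalization of the constraints `a (z, false) + a (z, true) = k z`, with an
additional exponential weight. -/
noncomputable def penalty {Z : Type*} [Fintype Z] (k : Z → ℕ) (y : Z × Bool → ℝ) (s : ℝ)
    (a : Z × Bool → ℕ) : ℝ :=
  exp (-s * ∑ z, ((a (z, false) : ℝ) + a (z, true) - k z) ^ 2 + ∑ i, (a i : ℝ) * y i)

lemma penalty_add_single {Z : Type*} [Fintype Z] [DecidableEq Z] (k : Z → ℕ) (y : Z × Bool → ℝ)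
    (s : ℝ) (α : Z × Bool → ℕ) (i j : Z × Bool) :
    penalty k y s (α + Pi.single i 1 + Pi.single j 1) = penalty k y s α *
      (exp (-2 * s * ((α (i.1, false) : ℝ) + α (i.1, true) - k i.1) - s + y i) *
       exp (-2 * s * ((α (j.1, false) : ℝ) + α (j.1, true) - k j.1) - s + y j)) *
      (if i.1 = j.1 then exp (-2 * s) else 1) := by
  have hcell : ∀ z : Z, (((α + Pi.single i 1 + Pi.single j 1 : Z × Bool → ℕ) (z, false) : ℝ) +
      ((α + Pi.single i 1 + Pi.single j 1 : Z × Bool → ℕ) (z, true) : ℝ) - k z) ^ 2 =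
      ((α (z, false) : ℝ) + α (z, true) - k z) ^ 2 +
      (if i.1 = z then 2 * ((α (z, false) : ℝ) + α (z, true) - k z) + 1 else 0) +
      (if j.1 = z then 2 * ((α (z, false) : ℝ) + α (z, true) - k z) + 1 else 0) +
      (if i.1 = z then (if j.1 = z then 2 else 0) else 0) := by
    intro z
    obtain ⟨i, b⟩ := i
    obtain ⟨j, b'⟩ := j
    simp only [Pi.add_apply, Pi.single_apply, Prod.mk.injEq]
    by_cases h1 : i = z <;> by_cases h2 : j = z <;> cases b <;> cases b' <;>
      simp [h1, h2, eq_comm (a := z)] <;> ring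
  have hlin : ∑ l, (((α + Pi.single i 1 + Pi.single j 1 : Z × Bool → ℕ) l : ℕ) : ℝ) * y l =
      ∑ l, (α l : ℝ) * y l + y i + y j := by
    simp [add_mul, Finset.sum_add_distrib, Pi.single_apply]
  unfold penalty
  rw [hlin, Finset.sum_congr rfl fun z _ => hcell z]
  simp only [Finset.sum_add_distrib, Finset.sum_ite_eq, Finset.mem_univ, if_true]
  have hif : (if i.1 = j.1 then exp (-2 * s) else 1) = exp (if j.1 = i.1 then -2 * s else 0) := by
    simp only [eq_comm (a := i.1)]
    split_ifs <;> simp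
  rw [hif, ← Real.exp_add, ← Real.exp_add, ← Real.exp_add]
  congr 1
  split_ifs <;> ring

lemma penalty_isLorentzianOn {Z : Type*} [Fintype Z] [DecidableEq Z] (k : Z → ℕ)
    (y : Z × Bool → ℝ) {s : ℝ} (hs : 0 ≤ s) (N : ℕ) :
    IsLorentzianOn Finset.univ N (penalty k y s) := by
  intro α _ v w hw
  set μ : Z × Bool → ℝ := fun i =>
    exp (-2 * s * ((α (i.1, false) : ℝ) + α (i.1, true) - k i.1) - s + y i) with hμ
  set D := penalty k y s α with hD
  have hDpos : 0 < D := exp_pos _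
  have hη : exp (-2 * s) ≤ 1 := by rw [Real.exp_le_one_iff]; linarith
  refine matForm_reverse_cauchySchwarz _ _ (fun i j => by rw [add_single_comm]) μ ?_ v w
    (matForm_nonneg (fun _ _ _ _ => (exp_pos _).le) hw)
  intro v hv
  have hM : ∀ i j, penalty k y s (α + Pi.single i 1 + Pi.single j 1) =
      D * (μ i * μ j) - D * (1 - exp (-2 * s)) *
        ∑ z, (if i.1 = z then μ i else 0) * (if j.1 = z then μ j else 0) := by
    intro i j
    rw [penalty_add_single]
    have : ∑ z, (if i.1 = z then μ i else 0) * (if j.1 = z then μ j else 0) =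
        if i.1 = j.1 then μ i * μ j else 0 := by
      simp only [ite_mul, zero_mul, Finset.sum_ite_eq, Finset.mem_univ, if_true, mul_ite, mul_zero]
    rw [this]
    simp only [hμ, ← hD]
    split_ifs <;> ring
  have key : matForm Finset.univ (fun i j => penalty k y s (α + Pi.single i 1 + Pi.single j 1)) v v
      = D * (∑ i, v i * μ i) ^ 2 - D * (1 - exp (-2 * s)) *
        ∑ z, (∑ i : Z × Bool, v i * if i.1 = z then μ i else 0) ^ 2 := by
    have e : ∀ z, (∑ i : Z × Bool, v i * if i.1 = z then μ i else 0) ^ 2 =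
        ∑ i, ∑ j, v i * v j * ((if i.1 = z then μ i else 0) * (if j.1 = z then μ j else 0)) := by
      intro z
      rw [sq, Finset.sum_mul_sum]
      refine Finset.sum_congr rfl fun i _ => Finset.sum_congr rfl fun j _ => by ring
    rw [Finset.sum_congr rfl fun z _ => e z, Finset.sum_comm]
    have e2 : ∀ i, ∑ z, ∑ j, v i * v j *
          ((if i.1 = z then μ i else 0) * (if j.1 = z then μ j else 0)) =
        ∑ j, v i * v j * ∑ z, (if i.1 = z then μ i else 0) * (if j.1 = z then μ j else 0) := by
      intro i
      rw [Finset.sum_comm]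
      simp only [Finset.mul_sum]
    rw [Finset.sum_congr rfl fun i _ => e2 i, sq, Finset.sum_mul_sum]
    simp only [matForm, Finset.mul_sum (s := Finset.univ (α := Z × Bool)),
      ← Finset.sum_sub_distrib]
    refine Finset.sum_congr rfl fun i _ => Finset.sum_congr rfl fun j _ => ?_
    rw [hM]; ring
  rw [key, hv]
  have : 0 ≤ D * (1 - exp (-2 * s)) *
      ∑ z, (∑ i : Z × Bool, v i * if i.1 = z then μ i else 0) ^ 2 :=
    mul_nonneg (mul_nonneg hDpos.le (by linarith)) (Finset.sum_nonneg fun _ _ => sq_nonneg _)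
  nlinarith

lemma penalty_tendsto {Z : Type*} [Fintype Z] (k : Z → ℕ) (y : Z × Bool → ℝ)
    (a : Z × Bool → ℕ) :
    Tendsto (fun s => penalty k y s a) atTop
      (nhds (if ∀ z, a (z, false) + a (z, true) = k z then exp (∑ i, (a i : ℝ) * y i) else 0)) := by
  unfold penalty
  split_ifs with h
  · have : ∑ z, ((a (z, false) : ℝ) + a (z, true) - k z) ^ 2 = 0 :=
      Finset.sum_eq_zero fun z _ => by rw [← h z]; push_cast; ring
    simp [this]
  · push Not at h
    obtain ⟨z, hz⟩ := h
    have hpos : 0 < ∑ z, ((a (z, false) : ℝ) + a (z, true) - k z) ^ 2 := by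
      refine Finset.sum_pos' (fun _ _ => sq_nonneg _) ⟨z, Finset.mem_univ _, ?_⟩
      have : ((a (z, false) : ℝ) + a (z, true) - k z) ≠ 0 := by
        rw [sub_ne_zero]; exact_mod_cast hz
      positivity
    refine Real.tendsto_exp_atBot.comp (tendsto_atBot_add_const_right _ _ ?_)
    exact (tendsto_neg_atTop_atBot).atBot_mul_const hpos

/-- The box of tables bounded by `k`. -/
def tableBox {Z : Type*} [Fintype Z] [DecidableEq Z] (k : Z → ℕ) : Finset (Z → ℕ) :=
  Fintype.piFinset fun z => range (k z + 1)

/-- A table together with its complement. -/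
def withCompl {Z : Type*} (k A : Z → ℕ) (i : Z × Bool) : ℕ :=
  if i.2 then k i.1 - A i.1 else A i.1

/-- The vertex sums of a table and its complement, for an incidence map `g`. -/
def margin {Z V : Type*} [Fintype Z] [DecidableEq V] (k : Z → ℕ) (g : Z × Bool → V) (A : Z → ℕ) :
    V → ℕ :=
  fiberSum Finset.univ g (withCompl k A)

/-- Collapse all vertices outside `U` to one point. -/
def collapse {V : Type*} [DecidableEq V] (U : Finset V) (v : V) : Option U :=
  if h : v ∈ U then some ⟨v, h⟩ else none

/-- The multidegree on the collapsed vertex set with total `N`. -/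
def collapseDeg {V : Type*} (U : Finset V) (N : ℕ) (c : V → ℕ) (o : Option U) : ℕ :=
  o.elim (N - ∑ v ∈ U, c v) fun v => c v

lemma sum_fiberSum {ι κ : Type*} [DecidableEq κ] [Fintype κ] (S : Finset ι) (φ : ι → κ)
    (a : ι → ℕ) : ∑ v, fiberSum S φ a v = ∑ i ∈ S, a i :=
  Finset.sum_fiberwise S φ a

lemma fiberSum_collapse_some {ι V : Type*} [DecidableEq V] (S : Finset ι)
    (U : Finset V) (g : ι → V) (a : ι → ℕ) (v : U) :
    fiberSum S (fun i => collapse U (g i)) a (some v) = fiberSum S g a v := by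
  unfold fiberSum
  refine Finset.sum_congr (Finset.filter_congr fun i _ => ?_) fun _ _ => rfl
  simp only [collapse]
  split_ifs with h
  · rw [Option.some_inj, Subtype.ext_iff]
  · simp only [false_iff]
    exact fun h' => h (h' ▸ v.2)

lemma fiberSum_collapse_iff {ι V : Type*} [DecidableEq V] {S : Finset ι}
    {U : Finset V} {g : ι → V} {a : ι → ℕ} {N : ℕ} (ha : ∑ i ∈ S, a i = N) {c : V → ℕ}
    (hc : ∑ v ∈ U, c v ≤ N) :
    fiberSum S (fun i => collapse U (g i)) a = collapseDeg U N c ↔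
      ∀ v ∈ U, fiberSum S g a v = c v := by
  constructor
  · intro h v hv
    have := congrFun h (some ⟨v, hv⟩)
    rwa [fiberSum_collapse_some] at this
  · intro h
    have hsome : ∀ v : U, fiberSum S (fun i => collapse U (g i)) a (some v) = c v := fun v => by
      rw [fiberSum_collapse_some]; exact h v v.2
    have htot := sum_fiberSum S (fun i => collapse U (g i)) a
    rw [Fintype.sum_option, Finset.sum_congr rfl fun v _ => hsome v, ha,
      Finset.sum_coe_sort U c] at htot
    ext o
    cases o with
    | none => simp only [collapseDeg, Option.elim_none]; omega
    | some v => simpa [collapseDeg] using hsome v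

lemma margin_sum {Z V : Type*} [Fintype Z] [Fintype V] [DecidableEq V] {k A : Z → ℕ}
    (hA : ∀ z, A z ≤ k z) (g : Z × Bool → V) : ∑ v, margin k g A v = ∑ z, k z := by
  rw [margin, sum_fiberSum, Fintype.sum_prod_type]
  refine Finset.sum_congr rfl fun z _ => ?_
  have := hA z
  simp [withCompl]; omega

lemma pushCoeff_collapse_pos {ι V : Type*} [Fintype ι] [DecidableEq ι] [DecidableEq V]
    {U : Finset V} {g : ι → V} (hg : ∀ v ∈ U, ∃ i, g i = v) (hU : ∃ i, g i ∉ U) {N : ℕ}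
    {f : (ι → ℕ) → ℝ} (hf : ∀ a, 0 < f a) {c : V → ℕ} (hc : ∑ v ∈ U, c v ≤ N) :
    0 < pushCoeff Finset.univ N f (fun i => collapse U (g i)) (collapseDeg U N c) := by
  refine Finset.sum_pos (fun a _ => hf a) ?_
  have hsurj : Function.Surjective fun i => collapse U (g i) := by
    rintro (_ | v)
    · obtain ⟨i, hi⟩ := hU
      exact ⟨i, by simp [collapse, hi]⟩
    · obtain ⟨i, hi⟩ := hg v v.2
      exact ⟨i, by simp [collapse, hi]⟩
  set σ := Function.surjInv hsurj
  have hσ : ∀ o, collapse U (g (σ o)) = o := Function.surjInv_eq hsurj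
  set a : ι → ℕ := fun i => if σ (collapse U (g i)) = i then
    collapseDeg U N c (collapse U (g i)) else 0 with ha
  have hfib : fiberSum Finset.univ (fun i => collapse U (g i)) a = collapseDeg U N c := by
    ext o
    unfold fiberSum
    rw [Finset.sum_eq_single_of_mem (σ o) (by simp [hσ])]
    · simp [ha, hσ]
    · intro i hi hne
      simp only [Finset.mem_filter, Finset.mem_univ, true_and] at hi
      simp [ha, hi, hne.symm]
  refine ⟨a, ?_⟩
  rw [Finset.mem_filter, mem_piAntidiag]
  refine ⟨⟨?_, by simp⟩, hfib⟩
  have := sum_fiberSum Finset.univ (fun i => collapse U (g i)) a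
  rw [hfib, Fintype.sum_option] at this
  simp only [collapseDeg, Option.elim_none, Option.elim_some] at this
  rw [Finset.sum_coe_sort U c] at this
  have e : ∑ i, a i = Finset.univ.sum a := rfl
  omega

/-- Log-concavity of a positive sequence, in ratio form. -/
lemma mul_succ_le_of_logConcave {u : ℕ → ℝ} {D : ℕ} (hpos : ∀ b ≤ D, 0 < u b)
    (hlc : ∀ b, b + 2 ≤ D → u b * u (b + 2) ≤ u (b + 1) ^ 2) {a b : ℕ} (hab : a ≤ b)
    (hb : b + 1 ≤ D) : u a * u (b + 1) ≤ u (a + 1) * u b := by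
  induction b, hab using Nat.le_induction with
  | base => exact (mul_comm _ _).le
  | succ b hab ih =>
    have h1 := ih (by omega)
    have h2 := hlc b (by omega)
    have p0 := hpos b (by omega)
    have p1 := hpos (b + 1) (by omega)
    have pa := hpos a (by omega)
    refine le_of_mul_le_mul_right ?_ p0
    nlinarith [mul_le_mul_of_nonneg_left h2 pa.le, mul_le_mul_of_nonneg_right h1 p1.le]

lemma pushCoeff_penalty_logConcave {Z V : Type*} [Fintype Z] [DecidableEq Z] [DecidableEq V]
    (k : Z → ℕ) (g : Z × Bool → V) (y : Z × Bool → ℝ) {s : ℝ} (hs : 0 ≤ s) {U : Finset V} {i : V}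
    (hi : i ∈ U) (R : V → ℕ) (N b : ℕ) (hb : ∑ v ∈ U, Function.update R i (b + 2) v ≤ N) :
    pushCoeff Finset.univ N (penalty k y s) (fun x => collapse U (g x))
        (collapseDeg U N (Function.update R i b)) *
      pushCoeff Finset.univ N (penalty k y s) (fun x => collapse U (g x))
        (collapseDeg U N (Function.update R i (b + 2))) ≤
      pushCoeff Finset.univ N (penalty k y s) (fun x => collapse U (g x))
        (collapseDeg U N (Function.update R i (b + 1))) ^ 2 := by
  have hsum : ∀ t, ∑ v ∈ U, Function.update R i t v = t + ∑ v ∈ U.erase i, R v := by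
    intro t
    rw [← Finset.add_sum_erase _ _ hi]
    simp only [Function.update_self]
    congr 1
    exact Finset.sum_congr rfl fun v hv => Function.update_of_ne (Finset.ne_of_mem_erase hv) _ _
  rw [hsum] at hb
  set α : Option U → ℕ := fun o => o.elim (N - 2 - ∑ v ∈ U, Function.update R i b v)
    fun v => Function.update R i b v with hα
  have hN : N = N - 2 + 2 := by omega
  have key : ∀ p q : Option U, ∀ t, (p = none ∧ q = none ∧ t = 0) ∨
      (p = some ⟨i, hi⟩ ∧ q = none ∧ t = 1) ∨ (p = some ⟨i, hi⟩ ∧ q = some ⟨i, hi⟩ ∧ t = 2) →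
      collapseDeg U N (Function.update R i (b + t)) = α + Pi.single p 1 + Pi.single q 1 := by
    intro p q t h
    ext o
    rcases o with _ | ⟨v, hv⟩
    · simp only [collapseDeg, Option.elim_none, hsum, hα, Pi.add_apply, Pi.single_apply]
      rcases h with ⟨rfl, rfl, rfl⟩ | ⟨rfl, rfl, rfl⟩ | ⟨rfl, rfl, rfl⟩ <;> simp <;> omega
    · simp only [collapseDeg, Option.elim_some, hα, Pi.add_apply, Pi.single_apply,
        Function.update_apply]
      rcases h with ⟨rfl, rfl, rfl⟩ | ⟨rfl, rfl, rfl⟩ | ⟨rfl, rfl, rfl⟩ <;>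
        by_cases hvi : v = i <;> simp [hvi]
  have k0 := key none none 0 (by simp)
  have k1 := key (some ⟨i, hi⟩) none 1 (by simp)
  have k2 := key (some ⟨i, hi⟩) (some ⟨i, hi⟩) 2 (by simp)
  rw [add_zero] at k0
  rw [k0, k1, k2, mul_comm]
  have := pushCoeff_logConcave (fun x => collapse U (g x)) (N - 2)
    (k := some ⟨i, hi⟩) (k' := none) (by simp) α Finset.univ (penalty k y s)
    (fun _ _ => exp_pos _) (penalty_isLorentzianOn k y hs _)
  rwa [← hN] at this

/-- The generating sum of the tables with prescribed margins on `U`. -/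
def marginSum {Z V : Type*} [Fintype Z] [DecidableEq Z] [Fintype V] [DecidableEq V] (k : Z → ℕ)
    (g : Z × Bool → V) (U : Finset V) (R : V → ℕ) (x : V → ℝ) : ℝ :=
  ∑ A ∈ tableBox k with ∀ v ∈ U, margin k g A v = R v, ∏ v, x v ^ margin k g A v

lemma pushCoeff_penalty_tendsto {Z V : Type*} [Fintype Z] [DecidableEq Z] [Fintype V]
    [DecidableEq V] (k : Z → ℕ) (g : Z × Bool → V) {x : V → ℝ} (hx : ∀ v, 0 < x v)
    (U : Finset V) (R : V → ℕ) (hR : ∑ v ∈ U, R v ≤ ∑ z, k z) :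
    Tendsto (fun s => pushCoeff Finset.univ (∑ z, k z) (penalty k (fun i => log (x (g i))) s)
      (fun i => collapse U (g i)) (collapseDeg U (∑ z, k z) R)) atTop
      (nhds (marginSum k g U R x)) := by
  have hlim : marginSum k g U R x = ∑ a ∈ Finset.univ.piAntidiag (∑ z, k z) with
      fiberSum Finset.univ (fun i => collapse U (g i)) a = collapseDeg U (∑ z, k z) R,
      (if ∀ z, a (z, false) + a (z, true) = k z then
        exp (∑ i, (a i : ℝ) * log (x (g i))) else 0) := by
    unfold marginSum
    rw [← Finset.sum_filter]
    refine Finset.sum_bij' (fun A _ => withCompl k A) (fun a _ z => a (z, false)) ?_ ?_ ?_ ?_ ?_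
    · intro A hA
      simp only [Finset.mem_filter, tableBox, Fintype.mem_piFinset, Finset.mem_range,
        Nat.lt_succ_iff] at hA ⊢
      have hs : ∑ i, withCompl k A i = ∑ z, k z := by
        rw [← margin_sum hA.1 g, margin, sum_fiberSum]
      refine ⟨⟨mem_piAntidiag.2 ⟨hs, by simp⟩, (fiberSum_collapse_iff hs hR).2 hA.2⟩,
        fun z => ?_⟩
      have := hA.1 z
      simp [withCompl]; omega
    · intro a ha
      simp only [Finset.mem_filter, tableBox, Fintype.mem_piFinset, Finset.mem_range,
        Nat.lt_succ_iff, mem_piAntidiag] at ha ⊢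
      obtain ⟨⟨⟨hs, _⟩, hf⟩, hz⟩ := ha
      have e : withCompl k (fun z => a (z, false)) = a := by
        ext ⟨z, b⟩
        have := hz z
        cases b <;> simp [withCompl]; omega
      refine ⟨fun z => by have := hz z; omega, ?_⟩
      rw [margin, e]
      exact (fiberSum_collapse_iff hs hR).1 hf
    · intro A hA
      ext z; simp [withCompl]
    · intro a ha
      have hz := (Finset.mem_filter.1 ha).2
      ext ⟨z, b⟩
      have := hz z
      cases b <;> simp [withCompl]; omega
    · intro A hA
      rw [Real.exp_sum, ← Finset.prod_fiberwise Finset.univ g]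
      refine Finset.prod_congr rfl fun v _ => ?_
      have : ∀ i ∈ Finset.univ.filter (fun i => g i = v),
          exp ((withCompl k A i : ℝ) * log (x (g i))) = x v ^ withCompl k A i := by
        intro i hi
        rw [(Finset.mem_filter.1 hi).2, mul_comm, Real.exp_mul, Real.exp_log (hx v),
          Real.rpow_natCast]
      rw [Finset.prod_congr rfl this, Finset.prod_pow_eq_pow_sum]
      rfl
  rw [hlim]
  exact tendsto_finsetSum _ fun a _ => penalty_tendsto k _ a

/-- The sequence obtained by varying one of the prescribed margins is log-concave without
internal zeros, in ratio form. -/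
theorem marginSum_mul_le {Z V : Type*} [Fintype Z] [DecidableEq Z] [Fintype V]
    [DecidableEq V] (k : Z → ℕ) {g : Z × Bool → V} {x : V → ℝ} (hx : ∀ v, 0 < x v)
    {U : Finset V} (hg : ∀ v ∈ U, ∃ i, g i = v) (hU : ∃ i, g i ∉ U) {i : V} (hi : i ∈ U)
    (R : V → ℕ) {a b : ℕ} (hab : a ≤ b) :
    marginSum k g U (Function.update R i a) x * marginSum k g U (Function.update R i (b + 1)) x ≤
      marginSum k g U (Function.update R i (a + 1)) x *
        marginSum k g U (Function.update R i b) x := by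
  have hsum : ∀ t, ∑ v ∈ U, Function.update R i t v = t + ∑ v ∈ U.erase i, R v := by
    intro t
    rw [← Finset.add_sum_erase _ _ hi]
    simp only [Function.update_self]
    congr 1
    exact Finset.sum_congr rfl fun v hv => Function.update_of_ne (Finset.ne_of_mem_erase hv) _ _
  have hnn : ∀ c, 0 ≤ marginSum k g U c x := fun c =>
    Finset.sum_nonneg fun A _ => Finset.prod_nonneg fun v _ => pow_nonneg (hx v).le _
  by_cases hb : ∑ v ∈ U, Function.update R i (b + 1) v ≤ ∑ z, k z
  swap
  · have : marginSum k g U (Function.update R i (b + 1)) x = 0 := by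
      unfold marginSum
      rw [Finset.filter_eq_empty_iff.2, Finset.sum_empty]
      intro A hA h
      apply hb
      rw [← Finset.sum_congr rfl h]
      simp only [tableBox, Fintype.mem_piFinset, Finset.mem_range, Nat.lt_succ_iff] at hA
      rw [← margin_sum hA g]
      exact Finset.sum_le_univ_sum_of_nonneg fun _ => Nat.zero_le _
    rw [this, mul_zero]
    exact mul_nonneg (hnn _) (hnn _)
  rw [hsum] at hb
  have T : ∀ t ≤ b + 1, _ := fun t ht => pushCoeff_penalty_tendsto k g hx U
    (Function.update R i t) (by rw [hsum]; omega)
  refine le_of_tendsto_of_tendsto ((T a (by omega)).mul (T (b + 1) (by omega)))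
    ((T (a + 1) (by omega)).mul (T b (by omega))) ?_
  filter_upwards [eventually_ge_atTop 0] with s hs
  refine mul_succ_le_of_logConcave (u := fun t => pushCoeff Finset.univ (∑ z, k z)
    (penalty k (fun i => log (x (g i))) s) (fun i => collapse U (g i))
    (collapseDeg U (∑ z, k z) (Function.update R i t))) (D := b + 1) ?_ ?_ hab le_rfl
  · intro t ht
    exact pushCoeff_collapse_pos hg hU (fun _ => exp_pos _) (by rw [hsum]; omega)
  · intro t ht
    exact pushCoeff_penalty_logConcave k g _ hs hi R _ t (by rw [hsum]; omega)

lemma one_add_inv_pow_mul_le_exp {s : ℕ} (hs : 1 ≤ s) :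
    (1 + 1 / (s : ℝ)) ^ s * (1 + 1 / (3 * s)) ≤ exp 1 := by
  rcases hs.eq_or_lt with rfl | hs
  · have := Real.exp_one_gt_d9
    norm_num
    linarith
  have hs' : (2 : ℝ) ≤ s := by exact_mod_cast hs
  have h0 : (0 : ℝ) < s := by linarith
  have h1 : log (1 + 1 / (s : ℝ)) ≤ (1 + 1 / (s : ℝ) - (1 + 1 / (s : ℝ))⁻¹) / 2 := by
    rw [← Real.sinh_log (by positivity), Real.self_le_sinh_iff]
    exact Real.log_nonneg (by simp)
  have h2 : (s : ℝ) * log (1 + 1 / (s : ℝ)) ≤ 1 - 1 / (2 * (s + 1)) := by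
    refine (mul_le_mul_of_nonneg_left h1 h0.le).trans (le_of_eq ?_)
    field_simp
    ring
  have h3 : 1 / (3 * (s : ℝ)) ≤ 1 / (2 * (s + 1)) := by
    apply one_div_le_one_div_of_le <;> linarith
  calc (1 + 1 / (s : ℝ)) ^ s * (1 + 1 / (3 * s))
      ≤ exp (s * log (1 + 1 / (s : ℝ))) * exp (1 / (3 * s)) := by
        rw [Real.exp_nat_mul, Real.exp_log (by positivity)]
        apply mul_le_mul_of_nonneg_left _ (by positivity)
        linarith [Real.add_one_le_exp (1 / (3 * (s : ℝ)))]
    _ = exp (s * log (1 + 1 / (s : ℝ)) + 1 / (3 * s)) := by rw [Real.exp_add]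
    _ ≤ exp 1 := by rw [Real.exp_le_exp]; linarith

lemma five_mul_sq_le {s : ℕ} (hs : 1 ≤ s) {κ : ℝ} (hκ0 : 0 ≤ κ)
    (hκ : κ ≤ (1 + 1 / (s : ℝ)) ^ s * (s + 1)) :
    5 * κ ^ 2 ≤ 4 * exp 1 ^ 2 * (s * (1 + 2 * s)) := by
  have hs' : (1 : ℝ) ≤ s := by exact_mod_cast hs
  have h := one_add_inv_pow_mul_le_exp hs
  set P := (1 + 1 / (s : ℝ)) ^ s with hP
  have hP0 : 0 < P := by positivity
  have h1 : P * (3 * s + 1) ≤ exp 1 * (3 * s) := by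
    have : P * (3 * s + 1) = P * (1 + 1 / (3 * s)) * (3 * s) := by field_simp
    rw [this]
    exact mul_le_mul_of_nonneg_right h (by positivity)
  have h2 : (P * (3 * s + 1)) ^ 2 ≤ (exp 1 * (3 * s)) ^ 2 :=
    pow_le_pow_left₀ (by positivity) h1 2
  have h3 : κ ^ 2 ≤ (P * (s + 1)) ^ 2 := pow_le_pow_left₀ hκ0 hκ 2
  have h4 : 5 * (s + 1) ^ 2 * (9 * (s : ℝ) ^ 2) ≤ 4 * (s * (1 + 2 * s)) * (3 * s + 1) ^ 2 := by
    have : 0 ≤ 27 * (s : ℝ) ^ 3 - 6 * s ^ 2 - 13 * s + 4 := by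
      nlinarith [mul_nonneg (sub_nonneg.2 hs') (sub_nonneg.2 hs'),
        mul_nonneg (mul_nonneg (sub_nonneg.2 hs') (sub_nonneg.2 hs')) (sub_nonneg.2 hs')]
    nlinarith [mul_nonneg this (zero_le_one.trans hs')]
  have h5 : 5 * (P * (s + 1)) ^ 2 * (3 * s + 1) ^ 2 ≤
      4 * exp 1 ^ 2 * (s * (1 + 2 * s)) * (3 * s + 1) ^ 2 := by
    calc 5 * (P * (s + 1)) ^ 2 * (3 * s + 1) ^ 2 = (P * (3 * s + 1)) ^ 2 * (5 * (s + 1) ^ 2) := by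
          ring
      _ ≤ (exp 1 * (3 * s)) ^ 2 * (5 * (s + 1) ^ 2) :=
          mul_le_mul_of_nonneg_right h2 (by positivity)
      _ = exp 1 ^ 2 * (5 * (s + 1) ^ 2 * (9 * (s : ℝ) ^ 2)) := by ring
      _ ≤ exp 1 ^ 2 * (4 * (s * (1 + 2 * s)) * (3 * s + 1) ^ 2) :=
          mul_le_mul_of_nonneg_left h4 (by positivity)
      _ = _ := by ring
  have := le_of_mul_le_mul_right h5 (by positivity)
  linarith

lemma geom_sum_range_le {q : ℝ} (h0 : 0 ≤ q) (h1 : q < 1) (n : ℕ) :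
    ∑ c ∈ range n, q ^ c ≤ (1 - q)⁻¹ := by
  rw [← tsum_geometric_of_lt_one h0 h1]
  exact (summable_geometric_of_lt_one h0 h1).sum_le_tsum _ fun _ _ => pow_nonneg h0 _

lemma sum_range_pow_div_pow {q : ℝ} (h0 : 0 < q) {r d : ℕ} (hrd : r ≤ d) :
    (∑ c ∈ range (d + 1), q ^ c) / q ^ r = q ^ (d - r) * ∑ c ∈ range (d + 1), q⁻¹ ^ c := by
  rw [← Finset.sum_range_reflect, div_eq_iff (by positivity), mul_right_comm, ← pow_add,
    Nat.sub_add_cancel hrd, Finset.mul_sum]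
  refine Finset.sum_congr rfl fun c hc => ?_
  have : c ≤ d := by simp at hc; omega
  rw [inv_pow, ← div_eq_mul_inv, eq_div_iff (by positivity), ← pow_add]
  congr 1; omega

lemma exists_ratio_five_mul_sq_le {r d : ℕ} (hr : 1 ≤ r) (hrd : r ≤ d) :
    ∃ q : ℝ, 0 < q ∧ 5 * ((∑ c ∈ range (d + 1), q ^ c) / q ^ r) ^ 2 ≤
      4 * exp 1 ^ 2 * (r * (1 + d)) := by
  have he := Real.exp_one_gt_d9
  have hr' : (1 : ℝ) ≤ r := by exact_mod_cast hr
  rcases Nat.lt_or_ge (d - r) r with h | h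
  · rcases Nat.eq_zero_or_pos (d - r) with hs | hs
    · refine ⟨2, two_pos, ?_⟩
      have hd : (1 : ℝ) ≤ d := by exact_mod_cast hr.trans hrd
      rw [sum_range_pow_div_pow two_pos hrd, hs, pow_zero, one_mul]
      have h2 : ∑ c ∈ range (d + 1), (2 : ℝ)⁻¹ ^ c ≤ 2 :=
        (geom_sum_range_le (by norm_num) (by norm_num) _).trans (by norm_num)
      have h3 : (0 : ℝ) ≤ ∑ c ∈ range (d + 1), (2 : ℝ)⁻¹ ^ c := by positivity
      have h4 : (2 : ℝ) ≤ r * (1 + d) := by nlinarith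
      have h5 : 5 ≤ exp 1 ^ 2 := by nlinarith
      nlinarith
    · set s := d - r with hsd
      have hs0 : (0 : ℝ) < s := by exact_mod_cast hs
      refine ⟨1 + 1 / s, by positivity, ?_⟩
      rw [sum_range_pow_div_pow (by positivity) hrd, ← hsd]
      refine (five_mul_sq_le hs (by positivity) ?_).trans ?_
      · refine mul_le_mul_of_nonneg_left ?_ (by positivity)
        refine (geom_sum_range_le (by positivity) (inv_lt_one_of_one_lt₀ (by simp [hs0])) _).trans
          (le_of_eq ?_)
        field_simp
        ring
      · have h1 : (s : ℝ) + 1 ≤ r := by exact_mod_cast h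
        have h2 : (d : ℝ) = s + r := by
          have : d = s + r := by omega
          exact_mod_cast this
        refine mul_le_mul_of_nonneg_left ?_ (by positivity)
        rw [h2]; nlinarith
  · have hr0 : (0 : ℝ) < r := by linarith
    refine ⟨r / (r + 1), by positivity, ?_⟩
    refine (five_mul_sq_le hr (by positivity) ?_).trans ?_
    · have h1 := geom_sum_range_le (q := (r : ℝ) / (r + 1)) (by positivity)
        (by rw [div_lt_one (by positivity)]; linarith) (d + 1)
      have h2 : (1 - (r : ℝ) / (r + 1))⁻¹ = r + 1 := by field_simp; ring
      rw [h2] at h1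
      rw [div_le_iff₀ (by positivity)]
      refine h1.trans (le_of_eq ?_)
      have h3 : (1 + 1 / (r : ℝ)) ^ r * ((r : ℝ) / (r + 1)) ^ r = 1 := by
        rw [← mul_pow]
        have : (1 + 1 / (r : ℝ)) * (r / (r + 1)) = 1 := by field_simp
        rw [this, one_pow]
      rw [mul_right_comm, h3, one_mul]
    · refine mul_le_mul_of_nonneg_left ?_ (by positivity)
      have : (2 * r : ℝ) ≤ d := by
        have : 2 * r ≤ d := by omega
        exact_mod_cast this
      nlinarith

/-- A log-concave sequence is dominated by a geometric one touching it at `r`. -/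
lemma exists_geometric_majorant {u : ℕ → ℝ} (hnn : ∀ c, 0 ≤ u c)
    (hlc : ∀ a b, a ≤ b → u a * u (b + 1) ≤ u (a + 1) * u b) {r : ℕ} (hr : 1 ≤ r)
    (hur : 0 < u r) : ∃ ρ : ℝ, 0 < ρ ∧ ∀ c, u c * ρ ^ r ≤ u r * ρ ^ c := by
  obtain ⟨ρ, hρ, hup, hdown⟩ : ∃ ρ : ℝ, 0 < ρ ∧ (∀ c, r ≤ c → u (c + 1) ≤ ρ * u c) ∧
      ∀ c, c < r → u c * ρ ≤ u (c + 1) := by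
    rcases (hnn (r + 1)).eq_or_lt with h | h
    · have hz : ∀ c, r ≤ c → u (c + 1) = 0 := by
        intro c hc
        have := hlc r c hc
        rw [← h, zero_mul] at this
        exact le_antisymm (nonpos_of_mul_nonpos_right this hur) (hnn _)
      obtain ⟨p, rfl⟩ : ∃ p, r = p + 1 := ⟨r - 1, by omega⟩
      rcases (hnn p).eq_or_lt with h' | h'
      · refine ⟨1, one_pos, fun c hc => by rw [hz c hc, one_mul]; exact hnn _, fun c hc => ?_⟩
        have := hlc c p (by omega)
        rw [← h', mul_zero] at this
        have := nonpos_of_mul_nonpos_left this hur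
        linarith [hnn (c + 1)]
      · refine ⟨u (p + 1) / u p, by positivity,
          fun c hc => by rw [hz c hc]; exact mul_nonneg (by positivity) (hnn _), fun c hc => ?_⟩
        have := hlc c p (by omega)
        rw [← mul_div_assoc, div_le_iff₀ h']
        exact this
    · refine ⟨u (r + 1) / u r, by positivity, fun c hc => ?_, fun c hc => ?_⟩
      · have := hlc r c hc
        rw [div_mul_eq_mul_div, le_div_iff₀ hur]
        linarith
      · have := hlc c r hc.le
        rw [← mul_div_assoc, div_le_iff₀ hur]
        exact this
  refine ⟨ρ, hρ, fun c => ?_⟩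
  rcases le_total r c with h | h
  · induction c, h using Nat.le_induction with
    | base => exact le_rfl
    | succ c hc ih =>
      calc u (c + 1) * ρ ^ r ≤ ρ * u c * ρ ^ r :=
            mul_le_mul_of_nonneg_right (hup c hc) (by positivity)
        _ = ρ * (u c * ρ ^ r) := by ring
        _ ≤ ρ * (u r * ρ ^ c) := mul_le_mul_of_nonneg_left ih hρ.le
        _ = _ := by ring
  · induction h using Nat.decreasingInduction with
    | self => exact le_rfl
    | of_succ c hc ih =>
      refine le_of_mul_le_mul_left ?_ hρ
      calc ρ * (u c * ρ ^ r) = u c * ρ * ρ ^ r := by ring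
        _ ≤ u (c + 1) * ρ ^ r := mul_le_mul_of_nonneg_right (hdown c hc) (by positivity)
        _ ≤ u r * ρ ^ (c + 1) := ih
        _ = _ := by ring

lemma exists_sum_pow_le {u : ℕ → ℝ} (hnn : ∀ c, 0 ≤ u c)
    (hlc : ∀ a b, a ≤ b → u a * u (b + 1) ≤ u (a + 1) * u b) {r : ℕ} (hr : 1 ≤ r)
    (hur : 0 < u r) (d : ℕ) {q : ℝ} (hq : 0 < q) :
    ∃ t : ℝ, 0 < t ∧ ∑ c ∈ range (d + 1), u c * t ^ c ≤
      (∑ c ∈ range (d + 1), q ^ c) / q ^ r * (u r * t ^ r) := by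
  obtain ⟨ρ, hρ, h⟩ := exists_geometric_majorant hnn hlc hr hur
  refine ⟨q / ρ, by positivity, ?_⟩
  have e : (∑ c ∈ range (d + 1), q ^ c) / q ^ r * (u r * (q / ρ) ^ r) =
      ∑ c ∈ range (d + 1), u r / ρ ^ r * q ^ c := by
    rw [← Finset.mul_sum, div_pow]
    field_simp
  rw [e]
  refine Finset.sum_le_sum fun c _ => ?_
  rw [div_pow, div_mul_eq_mul_div, le_div_iff₀ (by positivity)]
  calc u c * (q ^ c / ρ ^ c) * ρ ^ r = u c * ρ ^ r * (q ^ c / ρ ^ c) := by ring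
    _ ≤ u r * ρ ^ c * (q ^ c / ρ ^ c) := mul_le_mul_of_nonneg_right (h c) (by positivity)
    _ = u r * q ^ c := by field_simp

lemma margin_le {Z V : Type*} [Fintype Z] [DecidableEq Z] [DecidableEq V] {k A : Z → ℕ}
    (hA : A ∈ tableBox k) (g : Z × Bool → V) (v : V) :
    margin k g A v ≤ fiberSum Finset.univ g (fun i => k i.1) v := by
  simp only [tableBox, Fintype.mem_piFinset, Finset.mem_range, Nat.lt_succ_iff] at hA
  refine Finset.sum_le_sum fun i _ => ?_
  have := hA i.1
  unfold withCompl
  split_ifs <;> omega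

lemma marginSum_nonneg {Z V : Type*} [Fintype Z] [DecidableEq Z] [Fintype V] [DecidableEq V]
    (k : Z → ℕ) (g : Z × Bool → V) (U : Finset V) (R : V → ℕ) {x : V → ℝ} (hx : ∀ v, 0 < x v) :
    0 ≤ marginSum k g U R x :=
  Finset.sum_nonneg fun _ _ => Finset.prod_nonneg fun v _ => pow_nonneg (hx v).le _

lemma marginSum_pos {Z V : Type*} [Fintype Z] [DecidableEq Z] [Fintype V] [DecidableEq V]
    {k : Z → ℕ} {g : Z × Bool → V} (U : Finset V) {R : V → ℕ} {x : V → ℝ} (hx : ∀ v, 0 < x v)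
    {A : Z → ℕ} (hA : A ∈ tableBox k) (hAR : margin k g A = R) : 0 < marginSum k g U R x :=
  Finset.sum_pos (fun _ _ => Finset.prod_pos fun v _ => pow_pos (hx v) _)
    ⟨A, Finset.mem_filter.2 ⟨hA, fun v _ => congrFun hAR v⟩⟩

lemma marginSum_rescale {Z V : Type*} [Fintype Z] [DecidableEq Z] [Fintype V] [DecidableEq V]
    (k : Z → ℕ) (g : Z × Bool → V) {U U' : Finset V} (hU : U ⊆ U') (R : V → ℕ) {x x' : V → ℝ}
    (hx : ∀ v, 0 < x v) (h : ∀ v ∉ U, x' v = x v) :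
    marginSum k g U' R x' = (∏ v ∈ U, (x' v / x v) ^ R v) * marginSum k g U' R x := by
  unfold marginSum
  rw [Finset.mul_sum]
  refine Finset.sum_congr rfl fun A hA => ?_
  have hA' := (Finset.mem_filter.1 hA).2
  have e : ∏ v ∈ U, (x' v / x v) ^ R v = ∏ v, if v ∈ U then (x' v / x v) ^ R v else 1 := by
    simp
  rw [e, ← Finset.prod_mul_distrib]
  refine Finset.prod_congr rfl fun v _ => ?_
  split_ifs with hv
  · rw [hA' v (hU hv), ← mul_pow, div_mul_cancel₀ _ (hx v).ne']
  · rw [h v hv, one_mul]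

lemma prod_update_pow {V : Type*} [Fintype V] [DecidableEq V] (x : V → ℝ) (i : V) (t : ℝ)
    (μ : V → ℕ) : ∏ v, Function.update x i t v ^ μ v =
      (∏ v, Function.update x i 1 v ^ μ v) * t ^ μ i := by
  rw [← Finset.mul_prod_erase _ _ (Finset.mem_univ i),
    ← Finset.mul_prod_erase _ (fun v => Function.update x i 1 v ^ μ v) (Finset.mem_univ i)]
  simp only [Function.update_self, one_pow, one_mul]
  rw [mul_comm]
  congr 1
  refine Finset.prod_congr rfl fun v hv => ?_
  rw [Function.update_of_ne (Finset.ne_of_mem_erase hv),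
    Function.update_of_ne (Finset.ne_of_mem_erase hv)]

lemma marginSum_insert_update {Z V : Type*} [Fintype Z] [DecidableEq Z] [Fintype V]
    [DecidableEq V] (k : Z → ℕ) (g : Z × Bool → V) {U : Finset V} {i : V} (hi : i ∉ U)
    (R : V → ℕ) (x : V → ℝ) (c : ℕ) (t : ℝ) :
    marginSum k g (insert i U) (Function.update R i c) (Function.update x i t) =
      ∑ A ∈ (tableBox k).filter (fun A => ∀ v ∈ U, margin k g A v = R v) with
        margin k g A i = c, (∏ v, Function.update x i 1 v ^ margin k g A v) * t ^ c := by
  unfold marginSum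
  rw [Finset.filter_filter]
  refine Finset.sum_congr (Finset.filter_congr fun A _ => ?_) fun A hA => ?_
  · rw [Finset.forall_mem_insert, Function.update_self, and_comm]
    refine and_congr_left fun _ => forall₂_congr fun v hv => ?_
    rw [Function.update_of_ne (ne_of_mem_of_not_mem hv hi)]
  · rw [prod_update_pow, (Finset.mem_filter.1 hA).2.2]

lemma marginSum_update {Z V : Type*} [Fintype Z] [DecidableEq Z] [Fintype V]
    [DecidableEq V] (k : Z → ℕ) (g : Z × Bool → V) {U : Finset V} {i : V} (hi : i ∉ U)
    (R : V → ℕ) (x : V → ℝ) (t : ℝ) :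
    marginSum k g U R (Function.update x i t) =
      ∑ c ∈ range (fiberSum Finset.univ g (fun i => k i.1) i + 1),
        marginSum k g (insert i U) (Function.update R i c) (Function.update x i 1) * t ^ c := by
  simp only [marginSum_insert_update k g hi R x, one_pow, mul_one, Finset.sum_mul]
  have := Finset.sum_fiberwise_of_maps_to
    (s := (tableBox k).filter fun A => ∀ v ∈ U, margin k g A v = R v)
    (t := range (fiberSum Finset.univ g (fun i => k i.1) i + 1)) (g := fun A => margin k g A i)
    (fun A hA => Finset.mem_range_succ_iff.2 (margin_le (Finset.mem_filter.1 hA).1 g i))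
    (fun A => ∏ v, Function.update x i t v ^ margin k g A v)
  rw [marginSum, ← this]
  refine Finset.sum_congr rfl fun c _ => Finset.sum_congr rfl fun A hA => ?_
  rw [prod_update_pow, (Finset.mem_filter.1 hA).2]

/-- Eliminating the variables in `U` one at a time. -/
theorem exists_marginSum_empty_le {Z V : Type*} [Fintype Z] [DecidableEq Z] [Fintype V]
    [DecidableEq V] {k : Z → ℕ} {g : Z × Bool → V} (hg : Function.Surjective g) {R : V → ℕ}
    (hR : ∀ v, 1 ≤ R v) {A : Z → ℕ} (hA : A ∈ tableBox k) (hAR : margin k g A = R)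
    {q : V → ℝ} (hq : ∀ v, 0 < q v) (v₀ : V) (U : Finset V) (hU : v₀ ∉ U) :
    ∀ x : V → ℝ, (∀ v, 0 < x v) → ∃ x' : V → ℝ, (∀ v, 0 < x' v) ∧ (∀ v ∉ U, x' v = x v) ∧
      marginSum k g ∅ R x' ≤ (∏ v ∈ U,
        (∑ c ∈ range (fiberSum Finset.univ g (fun i => k i.1) v + 1), q v ^ c) / q v ^ R v) *
          marginSum k g U R x' := by
  induction U using Finset.induction_on with
  | empty => exact fun x hx => ⟨x, hx, fun _ _ => rfl, by simp⟩
  | insert i U hi ih =>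
    intro x hx
    have hU' : v₀ ∉ U := fun h => hU (Finset.mem_insert_of_mem h)
    have hpos : ∀ t : ℝ, 0 < t → ∀ v, 0 < Function.update x i t v := by
      intro t ht v
      rw [Function.update_apply]
      split_ifs
      exacts [ht, hx v]
    obtain ⟨t, ht, hle⟩ := exists_sum_pow_le
      (u := fun c => marginSum k g (insert i U) (Function.update R i c) (Function.update x i 1))
      (fun c => marginSum_nonneg k g _ _ (hpos 1 one_pos))
      (fun a b hab => marginSum_mul_le k (hpos 1 one_pos) (fun v _ => hg v)
        ⟨(hg v₀).choose, by rw [(hg v₀).choose_spec]; exact hU⟩ (Finset.mem_insert_self i U) R hab)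
      (hR i) (by
        simp only [Function.update_eq_self]
        exact marginSum_pos _ (hpos 1 one_pos) hA hAR)
      (fiberSum Finset.univ g (fun i => k i.1) i) (hq i)
    rw [← marginSum_update k g hi R x t] at hle
    have e : marginSum k g (insert i U) (Function.update R i (R i)) (Function.update x i 1) *
        t ^ R i = marginSum k g (insert i U) R (Function.update x i t) := by
      have h1 := marginSum_insert_update k g hi R x (R i) t
      have h2 := marginSum_insert_update k g hi R x (R i) 1
      rw [← Finset.sum_mul] at h1 h2
      rw [h2, one_pow, mul_one, ← h1, Function.update_eq_self]
    simp only [e] at hle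
    obtain ⟨x', hx', hagree, hbound⟩ := ih hU' _ (hpos t ht)
    refine ⟨x', hx', fun v hv => ?_, hbound.trans ?_⟩
    · rw [Finset.mem_insert, not_or] at hv
      rw [hagree v hv.2, Function.update_of_ne hv.1]
    · rw [Finset.prod_insert hi, marginSum_rescale k g (Finset.Subset.refl U) R (hpos t ht) hagree,
        marginSum_rescale k g (Finset.subset_insert i U) R (hpos t ht) hagree]
      have p1 : 0 ≤ ∏ v ∈ U, (∑ c ∈ range (fiberSum Finset.univ g (fun i => k i.1) v + 1),
          q v ^ c) / q v ^ R v := Finset.prod_nonneg fun v _ => by have := hq v; positivity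
      have p2 : 0 ≤ ∏ v ∈ U, (x' v / Function.update x i t v) ^ R v :=
        Finset.prod_nonneg fun v _ => pow_nonneg (div_nonneg (hx' v).le (hpos t ht v).le) _
      refine (mul_le_mul_of_nonneg_left (mul_le_mul_of_nonneg_left hle p2) p1).trans (le_of_eq ?_)
      ring

/-- A lower bound for the number of tables with given margins in terms of the value of the
generating function at a suitable point. -/
theorem exists_marginSum_le_card {Z V : Type*} [Fintype Z] [DecidableEq Z] [Fintype V]
    [DecidableEq V] {k : Z → ℕ} {g : Z × Bool → V} (hg : Function.Surjective g) {R : V → ℕ}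
    (hR : ∀ v, 1 ≤ R v) {A : Z → ℕ} (hA : A ∈ tableBox k) (hAR : margin k g A = R)
    {q : V → ℝ} (hq : ∀ v, 0 < q v) (v₀ : V) :
    ∃ x : V → ℝ, (∀ v, 0 < x v) ∧ marginSum k g ∅ R x ≤ (∏ v ∈ Finset.univ.erase v₀,
        (∑ c ∈ range (fiberSum Finset.univ g (fun i => k i.1) v + 1), q v ^ c) / q v ^ R v) *
          (((tableBox k).filter fun A => margin k g A = R).card * ∏ v, x v ^ R v) := by
  obtain ⟨x, hx, _, h⟩ := exists_marginSum_empty_le hg hR hA hAR hq v₀ (Finset.univ.erase v₀)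
    (Finset.notMem_erase _ _) (fun _ => 1) (fun _ => one_pos)
  refine ⟨x, hx, h.trans (le_of_eq ?_)⟩
  congr 1
  have hbox : ∀ B ∈ tableBox k, ∀ z, B z ≤ k z := fun B hB z => by
    simp only [tableBox, Fintype.mem_piFinset, Finset.mem_range, Nat.lt_succ_iff] at hB
    exact hB z
  have hiff : ∀ B ∈ tableBox k, (∀ v ∈ Finset.univ.erase v₀, margin k g B v = R v) ↔
      margin k g B = R := by
    intro B hB
    refine ⟨fun h => ?_, fun h v _ => congrFun h v⟩
    have h1 := margin_sum (hbox B hB) g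
    have h2 := margin_sum (hbox A hA) g
    rw [hAR, ← h1, ← Finset.add_sum_erase _ _ (Finset.mem_univ v₀),
      ← Finset.add_sum_erase _ (margin k g B) (Finset.mem_univ v₀),
      Finset.sum_congr rfl h] at h2
    ext v
    by_cases hv : v = v₀
    · subst hv
      exact Nat.add_right_cancel h2.symm
    · exact h v (by simp [hv])
  rw [marginSum, Finset.filter_congr hiff, Finset.sum_congr rfl fun B hB => by
    rw [(Finset.mem_filter.1 hB).2], Finset.sum_const, nsmul_eq_mul]

/-- The incidence map from signed cells of a grid to its rows and columns. -/
def gridVertex {m n : ℕ} (i : (Fin m × Fin n) × Bool) : Fin m ⊕ Fin n :=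
  if i.2 then Sum.inr i.1.2 else Sum.inl i.1.1

lemma fiberSum_gridVertex_inl {m n : ℕ} (a : (Fin m × Fin n) × Bool → ℕ) (i : Fin m) :
    fiberSum Finset.univ gridVertex a (Sum.inl i) = ∑ j, a ((i, j), false) := by
  unfold fiberSum
  rw [Finset.sum_filter, Fintype.sum_prod_type, Fintype.sum_prod_type_right]
  simp [gridVertex]

lemma fiberSum_gridVertex_inr {m n : ℕ} (a : (Fin m × Fin n) × Bool → ℕ) (j : Fin n) :
    fiberSum Finset.univ gridVertex a (Sum.inr j) = ∑ i, a ((i, j), true) := by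
  unfold fiberSum
  rw [Finset.sum_filter, Fintype.sum_prod_type, Fintype.sum_prod_type]
  simp [gridVertex]

lemma margin_eq_iff {m n : ℕ} {K : Fin m → Fin n → ℕ} {R : Fin m → ℕ} {C : Fin n → ℕ}
    (hC : ∀ j, C j ≤ ∑ i, K i j) {A : Fin m × Fin n → ℕ} (hA : A ∈ tableBox fun p => K p.1 p.2) :
    margin (fun p => K p.1 p.2) gridVertex A = Sum.elim R (fun j => ∑ i, K i j - C j) ↔
      (∀ i, ∑ j, A (i, j) = R i) ∧ ∀ j, ∑ i, A (i, j) = C j := by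
  simp only [tableBox, Fintype.mem_piFinset, Finset.mem_range, Nat.lt_succ_iff] at hA
  have hsub : ∀ j, ∑ i, (K i j - A (i, j)) = ∑ i, K i j - ∑ i, A (i, j) := fun j =>
    Finset.sum_tsub_distrib _ fun i _ => hA (i, j)
  have hle : ∀ j, ∑ i, A (i, j) ≤ ∑ i, K i j := fun j => Finset.sum_le_sum fun i _ => hA (i, j)
  rw [funext_iff, Sum.forall]
  simp only [margin, fiberSum_gridVertex_inl, fiberSum_gridVertex_inr, withCompl, Sum.elim_inl,
    Sum.elim_inr, Bool.false_eq_true, if_false, if_true, hsub]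
  refine and_congr_right fun _ => forall_congr' fun j => ?_
  have := hC j
  have := hle j
  omega

lemma tableCount_eq_card {m n : ℕ} (K : Fin m → Fin n → ℕ) (R : Fin m → ℕ) {C : Fin n → ℕ}
    (hC : ∀ j, C j ≤ ∑ i, K i j) :
    tableCount (fun i j => (K i j : ℕ∞)) R C = ((tableBox fun p : Fin m × Fin n => K p.1 p.2).filter
      fun A => margin (fun p => K p.1 p.2) gridVertex A =
        Sum.elim R (fun j => ∑ i, K i j - C j)).card := by
  unfold tableCount
  rw [← Set.ncard_coe_finset, ← Set.ncard_image_of_injective _ (Equiv.curry _ _ ℕ).injective]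
  congr 1
  ext A
  rw [Equiv.image_eq_preimage_symm]
  simp only [Set.mem_ofPred_eq, Set.mem_preimage, Finset.coe_filter, Nat.cast_le]
  constructor
  · rintro ⟨h1, h2, h3⟩
    have hmem : (Equiv.curry (Fin m) (Fin n) ℕ).symm A ∈ tableBox fun p => K p.1 p.2 := by
      simp only [tableBox, Fintype.mem_piFinset, Finset.mem_range, Nat.lt_succ_iff]
      exact fun p => h3 p.1 p.2
    exact ⟨hmem, (margin_eq_iff hC hmem).2 ⟨h1, h2⟩⟩
  · rintro ⟨hmem, h⟩
    obtain ⟨h1, h2⟩ := (margin_eq_iff hC hmem).1 h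
    simp only [tableBox, Fintype.mem_piFinset, Finset.mem_range, Nat.lt_succ_iff] at hmem
    exact ⟨h1, h2, fun i j => hmem (i, j)⟩

lemma genFun_eq_sum {m n : ℕ} (K : Fin m → Fin n → ℕ) (x : Fin m → ℝ) (y : Fin n → ℝ) :
    genFun K x y = ∑ A ∈ tableBox fun p : Fin m × Fin n => K p.1 p.2,
      (∏ i, x i ^ ∑ j, A (i, j)) * ∏ j, y j ^ ∑ i, A (i, j) := by
  unfold genFun tableBox
  rw [← Fintype.prod_prod_type' fun i j => ∑ t ∈ range (K i j + 1), (x i * y j) ^ t,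
    Finset.prod_univ_sum]
  refine Finset.sum_congr rfl fun A _ => ?_
  simp only [mul_pow, Finset.prod_mul_distrib, ← Finset.prod_pow_eq_pow_sum]
  rw [Fintype.prod_prod_type, Fintype.prod_prod_type_right]

lemma monom_pos {m : ℕ} {x : Fin m → ℝ} (hx : ∀ i, 0 < x i) (R : Fin m → ℕ) : 0 < monom x R :=
  Finset.prod_pos fun i _ => pow_pos (hx i) _

lemma tableCount_mul_monom_le {m n : ℕ} (K : Fin m → Fin n → ℕ) (R : Fin m → ℕ) {C : Fin n → ℕ}
    (hC : ∀ j, C j ≤ ∑ i, K i j) {x : Fin m → ℝ} {y : Fin n → ℝ}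
    (hx : ∀ i, 0 < x i) (hy : ∀ j, 0 < y j) :
    (tableCount (fun i j => (K i j : ℕ∞)) R C : ℝ) * (monom x R * monom y C) ≤
      genFun K x y := by
  rw [genFun_eq_sum, tableCount_eq_card K R hC, ← nsmul_eq_mul, ← Finset.sum_const]
  refine (Finset.sum_le_sum fun A hA => ?_).trans (Finset.sum_le_sum_of_subset_of_nonneg
    (Finset.filter_subset _ _) fun A _ _ => mul_nonneg
      (Finset.prod_nonneg fun i _ => pow_nonneg (hx i).le _)
      (Finset.prod_nonneg fun j _ => pow_nonneg (hy j).le _))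
  rw [Finset.mem_filter] at hA
  obtain ⟨h1, h2⟩ := (margin_eq_iff hC hA.1).1 hA.2
  simp only [h1, h2, monom, le_refl]

lemma marginSum_empty_eq_genFun {m n : ℕ} (K : Fin m → Fin n → ℕ) (R : Fin m ⊕ Fin n → ℕ)
    (x : Fin m → ℝ) {y : Fin n → ℝ} (hy : ∀ j, 0 < y j) :
    marginSum (fun p => K p.1 p.2) gridVertex ∅ R (Sum.elim x y) =
      genFun K x (fun j => (y j)⁻¹) * ∏ j, y j ^ ∑ i, K i j := by
  rw [genFun_eq_sum, marginSum, Finset.sum_mul]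
  simp only [Finset.notMem_empty, false_imp_iff, implies_true, Finset.filter_true]
  refine Finset.sum_congr rfl fun A hA => ?_
  simp only [tableBox, Fintype.mem_piFinset, Finset.mem_range, Nat.lt_succ_iff] at hA
  rw [Fintype.prod_sum_type, mul_assoc, ← Finset.prod_mul_distrib]
  simp only [margin, fiberSum_gridVertex_inl, fiberSum_gridVertex_inr, withCompl, Sum.elim_inl,
    Sum.elim_inr, Bool.false_eq_true, if_false, if_true]
  congr 1
  refine Finset.prod_congr rfl fun j _ => ?_
  rw [inv_pow, inv_mul_eq_div, eq_div_iff (pow_pos (hy j) _).ne', ← pow_add,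
    ← Finset.sum_add_distrib]
  congr 1
  exact Finset.sum_congr rfl fun i _ => Nat.sub_add_cancel (hA (i, j))

/-- Bounds on the individual factors `κ v` bound their product: omitting one factor gains the total
`∑ i, d (inl i)`. -/
lemma exists_two_pi_mul_prod_sq_le {m n : ℕ} (hm : 0 < m) (d : Fin m ⊕ Fin n → ℕ)
    (R : Fin m ⊕ Fin n → ℕ) (hR : ∀ v, 1 ≤ R v) {κ : Fin m ⊕ Fin n → ℝ}
    (hκ : ∀ v, 5 * κ v ^ 2 ≤ 4 * exp 1 ^ 2 * (R v * (1 + d v))) :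
    ∃ v₀, 2 * Real.pi * (∑ i, d (Sum.inl i) : ℕ) * (∏ v ∈ Finset.univ.erase v₀, κ v) ^ 2 ≤
      4 * ∏ v, exp 1 ^ 2 * (R v * (1 + d v) : ℝ) := by
  have : Nonempty (Fin m) := ⟨⟨0, hm⟩⟩
  obtain ⟨i₀, hi₀⟩ := Finite.exists_max fun i => d (Sum.inl i)
  have hsum : ∑ i, d (Sum.inl i) ≤ m * d (Sum.inl i₀) := by
    simpa using Finset.sum_le_card_nsmul Finset.univ _ _ fun i _ => hi₀ i
  refine ⟨Sum.inl i₀, ?_⟩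
  set E : Fin m ⊕ Fin n → ℝ := fun v => exp 1 ^ 2 * (R v * (1 + d v)) with hE
  have hE0 : ∀ v, 0 ≤ E v := fun v => by positivity
  have hcard : (Finset.univ.erase (Sum.inl i₀ : Fin m ⊕ Fin n)).card = m + n - 1 := by
    simp [Finset.card_erase_of_mem]
  have h1 : (5 / 4 : ℝ) ^ (m + n - 1) * (∏ v ∈ Finset.univ.erase (Sum.inl i₀), κ v) ^ 2 ≤
      ∏ v ∈ Finset.univ.erase (Sum.inl i₀), E v := by
    rw [← Finset.prod_pow, ← hcard, ← Finset.prod_const, ← Finset.prod_mul_distrib]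
    refine Finset.prod_le_prod (fun v _ => by positivity) fun v _ => ?_
    have := hκ v
    simp only [hE]
    linarith
  have h2 : (m : ℝ) ≤ 4 * (5 / 4 : ℝ) ^ (m + n - 1) := by
    have := one_add_mul_le_pow (a := (1 / 4 : ℝ)) (by norm_num) (m + n - 1)
    have hmn : (m : ℝ) ≤ (m + n - 1 : ℕ) + 1 := by
      exact_mod_cast (by omega : m ≤ m + n - 1 + 1)
    norm_num at this ⊢
    linarith
  have h3 : 2 * Real.pi * (m * d (Sum.inl i₀)) ≤ (5 / 4 : ℝ) ^ (m + n - 1) * (4 * E (Sum.inl i₀)) := by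
    have hpi := Real.pi_lt_d2
    have hpi0 := Real.pi_pos
    have he : 7 ≤ exp 1 ^ 2 := by nlinarith [Real.exp_one_gt_d9]
    have hR1 : (1 : ℝ) ≤ R (Sum.inl i₀) := by exact_mod_cast hR _
    have hd : (0 : ℝ) ≤ d (Sum.inl i₀) := by positivity
    have hEd : 7 * (d (Sum.inl i₀) : ℝ) ≤ E (Sum.inl i₀) := by
      simp only [hE]
      have : (d (Sum.inl i₀) : ℝ) ≤ R (Sum.inl i₀) * (1 + d (Sum.inl i₀)) := by nlinarith
      exact mul_le_mul he this hd (by positivity)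
    have h4 : (m * d (Sum.inl i₀) : ℝ) ≤ 4 * (5 / 4 : ℝ) ^ (m + n - 1) * d (Sum.inl i₀) :=
      mul_le_mul_of_nonneg_right h2 hd
    have h5 : (0 : ℝ) < (5 / 4 : ℝ) ^ (m + n - 1) := by positivity
    calc 2 * Real.pi * (m * d (Sum.inl i₀))
        ≤ 7 * (4 * (5 / 4 : ℝ) ^ (m + n - 1) * d (Sum.inl i₀)) :=
          mul_le_mul (by linarith) h4 (by positivity) (by norm_num)
      _ = (5 / 4 : ℝ) ^ (m + n - 1) * (4 * (7 * d (Sum.inl i₀))) := by ring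
      _ ≤ _ := by gcongr
  have h6 : ((∑ i, d (Sum.inl i) : ℕ) : ℝ) ≤ m * d (Sum.inl i₀) := by exact_mod_cast hsum
  have h7 : (0 : ℝ) < (5 / 4 : ℝ) ^ (m + n - 1) := by positivity
  rw [← Finset.mul_prod_erase _ _ (Finset.mem_univ (Sum.inl i₀))]
  set P := ∏ v ∈ Finset.univ.erase (Sum.inl i₀), κ v
  refine le_of_mul_le_mul_left ?_ h7
  calc (5 / 4 : ℝ) ^ (m + n - 1) * (2 * Real.pi * (∑ i, d (Sum.inl i) : ℕ) * P ^ 2)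
      ≤ (5 / 4 : ℝ) ^ (m + n - 1) * (2 * Real.pi * (m * d (Sum.inl i₀)) * P ^ 2) := by
        have := Real.pi_pos
        gcongr
    _ = 2 * Real.pi * (m * d (Sum.inl i₀)) * ((5 / 4 : ℝ) ^ (m + n - 1) * P ^ 2) := by ring
    _ ≤ (5 / 4 : ℝ) ^ (m + n - 1) * (4 * E (Sum.inl i₀)) *
          ∏ v ∈ Finset.univ.erase (Sum.inl i₀), E v :=
        mul_le_mul h3 h1 (by positivity) (mul_nonneg h7.le (mul_nonneg (by norm_num) (hE0 _)))
    _ = _ := by ring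

lemma gridVertex_surjective {m n : ℕ} (hm : 0 < m) (hn : 0 < n) :
    Function.Surjective (gridVertex (m := m) (n := n)) := by
  rintro (i | j)
  · exact ⟨((i, ⟨0, hn⟩), false), rfl⟩
  · exact ⟨((⟨0, hm⟩, j), true), rfl⟩

/-- The values of `G(x,y) / (x^R y^C)` on the positive orthant. -/
def genFunRatios {m n : ℕ} (K : Fin m → Fin n → ℕ) (R : Fin m → ℕ) (C : Fin n → ℕ) : Set ℝ :=
  {v : ℝ | ∃ (x : Fin m → ℝ) (y : Fin n → ℝ), (∀ i, 0 < x i) ∧ (∀ j, 0 < y j) ∧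
    v = genFun K x y / (monom x R * monom y C)}

lemma genFunRatios_nonempty {m n : ℕ} (K : Fin m → Fin n → ℕ) (R : Fin m → ℕ) (C : Fin n → ℕ) :
    (genFunRatios K R C).Nonempty :=
  ⟨_, fun _ => 1, fun _ => 1, fun _ => one_pos, fun _ => one_pos, rfl⟩

lemma tableCount_le_of_mem_genFunRatios {m n : ℕ} {K : Fin m → Fin n → ℕ} {R : Fin m → ℕ}
    {C : Fin n → ℕ} (hC : ∀ j, C j ≤ ∑ i, K i j) {v : ℝ} (hv : v ∈ genFunRatios K R C) :
    (tableCount (fun i j => (K i j : ℕ∞)) R C : ℝ) ≤ v := by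
  obtain ⟨x, y, hx, hy, rfl⟩ := hv
  rw [le_div_iff₀ (mul_pos (monom_pos hx R) (monom_pos hy C))]
  exact tableCount_mul_monom_le K R hC hx hy

lemma tableCount_le_sInf {m n : ℕ} (K : Fin m → Fin n → ℕ) (R : Fin m → ℕ) {C : Fin n → ℕ}
    (hC : ∀ j, C j ≤ ∑ i, K i j) :
    (tableCount (fun i j => (K i j : ℕ∞)) R C : ℝ) ≤ sInf (genFunRatios K R C) :=
  le_csInf (genFunRatios_nonempty K R C) fun _ hv => tableCount_le_of_mem_genFunRatios hC hv

lemma exists_sInf_le_mul_tableCount {m n : ℕ} (hm : 0 < m) (hn : 0 < n) (K : Fin m → Fin n → ℕ)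
    (R : Fin m → ℕ) (hR : ∀ i, 0 < R i) (C : Fin n → ℕ) (hC : ∀ j, C j < ∑ i, K i j)
    (hT : 0 < tableCount (fun i j => (K i j : ℕ∞)) R C) :
    ∃ P : ℝ, 0 < P ∧
      sInf (genFunRatios K R C) ≤ P * tableCount (fun i j => (K i j : ℕ∞)) R C ∧
      2 * Real.pi * (∑ i, ∑ j, K i j : ℕ) * P ^ 2 ≤
        4 * ((∏ i, exp 1 ^ 2 * (R i * (1 + ∑ j, K i j : ℕ) : ℝ)) *
          ∏ j, exp 1 ^ 2 * ((∑ i, K i j - C j : ℕ) * (1 + ∑ i, K i j : ℕ) : ℝ)) := by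
  have hC' : ∀ j, C j ≤ ∑ i, K i j := fun j => (hC j).le
  have hT' := hT
  rw [tableCount_eq_card K R hC', Finset.card_pos] at hT'
  obtain ⟨A, hA⟩ := hT'
  obtain ⟨hbox, hAR⟩ := Finset.mem_filter.1 hA
  set S : Fin m ⊕ Fin n → ℕ := Sum.elim R (fun j => ∑ i, K i j - C j) with hS
  set d : Fin m ⊕ Fin n → ℕ :=
    fiberSum Finset.univ gridVertex (fun i => K i.1.1 i.1.2) with hd
  have hS1 : ∀ v, 1 ≤ S v := by
    rintro (i | j)
    · exact hR i
    · have := hC j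
      simp only [hS, Sum.elim_inr]
      omega
  have hSd : ∀ v, S v ≤ d v := fun v => by
    rw [← hAR]
    exact margin_le hbox gridVertex v
  choose q hq0 hq using fun v => exists_ratio_five_mul_sq_le (hS1 v) (hSd v)
  obtain ⟨v₀, hv₀⟩ := exists_two_pi_mul_prod_sq_le hm d S hS1 hq
  obtain ⟨x, hx, hxle⟩ :=
    exists_marginSum_le_card (gridVertex_surjective hm hn) hS1 hbox hAR hq0 v₀
  set P := ∏ v ∈ Finset.univ.erase v₀, (∑ c ∈ range (d v + 1), q v ^ c) / q v ^ S v with hP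
  refine ⟨P, Finset.prod_pos fun v _ => div_pos
    (Finset.sum_pos (fun c _ => pow_pos (hq0 v) c) (by simp)) (pow_pos (hq0 v) _), ?_, ?_⟩
  · have hX : ∀ i, 0 < x (Sum.inl i) := fun i => hx _
    have hY : ∀ j, 0 < (x (Sum.inr j))⁻¹ := fun j => inv_pos.2 (hx _)
    refine (csInf_le ⟨0, fun v hv => (Nat.cast_nonneg _).trans
      (tableCount_le_of_mem_genFunRatios hC' hv)⟩
      ⟨fun i => x (Sum.inl i), fun j => (x (Sum.inr j))⁻¹, hX, hY, rfl⟩).trans ?_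
    rw [div_le_iff₀ (mul_pos (monom_pos hX R) (monom_pos hY C))]
    have hxe : x = Sum.elim (fun i => x (Sum.inl i)) (fun j => x (Sum.inr j)) := by
      ext (i | j) <;> rfl
    have hYK : 0 < ∏ j, x (Sum.inr j) ^ ∑ i, K i j :=
      Finset.prod_pos fun j _ => pow_pos (hx _) _
    have hYC : ∏ j, x (Sum.inr j) ^ (∑ i, K i j - C j) =
        monom (fun j => (x (Sum.inr j))⁻¹) C * ∏ j, x (Sum.inr j) ^ ∑ i, K i j := by
      rw [monom, ← Finset.prod_mul_distrib]
      refine Finset.prod_congr rfl fun j _ => ?_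
      rw [pow_sub₀ _ (hx _).ne' (hC' j), inv_pow, mul_comm]
    have hsum : marginSum (fun p : Fin m × Fin n => K p.1 p.2) gridVertex ∅ S x =
        genFun K (fun i => x (Sum.inl i)) (fun j => (x (Sum.inr j))⁻¹) *
          ∏ j, x (Sum.inr j) ^ ∑ i, K i j := by
      conv_lhs => rw [hxe]
      exact marginSum_empty_eq_genFun K S _ fun j => hx _
    have hprod : ∏ v, x v ^ S v = monom (fun i => x (Sum.inl i)) R *
        (monom (fun j => (x (Sum.inr j))⁻¹) C * ∏ j, x (Sum.inr j) ^ ∑ i, K i j) := by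
      rw [Fintype.prod_sum_type, ← hYC]
      rfl
    rw [hsum, hprod, ← tableCount_eq_card K R hC'] at hxle
    refine le_of_mul_le_mul_right (hxle.trans (le_of_eq ?_)) hYK
    ring
  · have hdl : ∀ i, d (Sum.inl i) = ∑ j, K i j := fun i => fiberSum_gridVertex_inl _ i
    have hdr : ∀ j, d (Sum.inr j) = ∑ i, K i j := fun j => fiberSum_gridVertex_inr _ j
    simpa only [Fintype.prod_sum_type, hdl, hdr, hS, Sum.elim_inl, Sum.elim_inr, Nat.cast_add,
      Nat.cast_one] using hv₀

lemma log_sqrt_two_pi_mul {a : ℝ} (ha : 0 < a) :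
    Real.log (Real.sqrt (2 * Real.pi * a)) = (Real.log (2 * Real.pi) + Real.log a) / 2 := by
  rw [Real.log_sqrt (by positivity), Real.log_mul (by positivity) ha.ne']

lemma sum_log_sqrt_two_pi_mul {m : ℕ} {R : Fin m → ℕ} (hR : ∀ i, 0 < R i) :
    ∑ i, Real.log (Real.sqrt (2 * Real.pi * R i)) =
      (m * Real.log (2 * Real.pi) + ∑ i, Real.log (R i)) / 2 := by
  rw [Finset.sum_congr rfl fun i _ => log_sqrt_two_pi_mul (Nat.cast_pos.2 (hR i)),
    ← Finset.sum_div, Finset.sum_add_distrib]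
  simp

lemma log_prod_exp_mul {m : ℕ} {R : Fin m → ℕ} (hR : ∀ i, 0 < R i) :
    Real.log (∏ i, exp 1 ^ 2 * (R i : ℝ)) = 2 * m + ∑ i, Real.log (R i) := by
  have hR' : ∀ i, (R i : ℝ) ≠ 0 := fun i => (Nat.cast_pos.2 (hR i)).ne'
  rw [Real.log_prod fun i _ => mul_ne_zero (by positivity) (hR' i),
    Finset.sum_congr rfl fun i _ => Real.log_mul (by positivity) (hR' i), Finset.sum_add_distrib]
  simp [mul_comm]

lemma log_le_of_two_pi_mul_sq_le {m n : ℕ} {R : Fin m → ℕ} {S : Fin n → ℕ} (hR : ∀ i, 0 < R i)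
    (hS : ∀ j, 0 < S j) {N P a b : ℝ} (hN : 0 < N) (hP : 0 < P) (ha : 0 < a) (hb : 0 < b)
    (h : 2 * Real.pi * N * P ^ 2 ≤
      4 * (((∏ i, exp 1 ^ 2 * (R i : ℝ)) * a) * ((∏ j, exp 1 ^ 2 * (S j : ℝ)) * b))) :
    Real.log P ≤ Real.log (a + b) + (-Real.log (Real.sqrt (2 * Real.pi * N)) +
      ∑ i, Real.log (Real.sqrt (2 * Real.pi * R i)) +
      ∑ j, Real.log (Real.sqrt (2 * Real.pi * S j)) +
      ((m : ℝ) + (n : ℝ)) * Real.log (Real.exp 1 / Real.sqrt (2 * Real.pi))) := by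
  have hRp : 0 < ∏ i, exp 1 ^ 2 * (R i : ℝ) :=
    Finset.prod_pos fun i _ => mul_pos (by positivity) (Nat.cast_pos.2 (hR i))
  have hSp : 0 < ∏ j, exp 1 ^ 2 * (S j : ℝ) :=
    Finset.prod_pos fun j _ => mul_pos (by positivity) (Nat.cast_pos.2 (hS j))
  have hab : 4 * (a * b) ≤ (a + b) ^ 2 := by linarith [sq_nonneg (a - b), four_mul_le_sq_add a b]
  have h1 : 2 * Real.pi * N * P ^ 2 ≤
      (a + b) ^ 2 * ((∏ i, exp 1 ^ 2 * (R i : ℝ)) * ∏ j, exp 1 ^ 2 * (S j : ℝ)) := by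
    refine h.trans (le_trans (le_of_eq ?_) (mul_le_mul_of_nonneg_right hab (mul_pos hRp hSp).le))
    ring
  have h2 := Real.log_le_log (by positivity) h1
  rw [Real.log_mul (by positivity) (by positivity), Real.log_mul (by positivity) hN.ne',
    Real.log_mul (by positivity) (mul_pos hRp hSp).ne', Real.log_mul hRp.ne' hSp.ne',
    Real.log_pow, Real.log_pow, log_prod_exp_mul hR, log_prod_exp_mul hS] at h2
  rw [log_sqrt_two_pi_mul hN, sum_log_sqrt_two_pi_mul hR, sum_log_sqrt_two_pi_mul hS,
    Real.log_div (by positivity) (by positivity), Real.log_exp, Real.log_sqrt (by positivity)]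
  push_cast at h2
  linarith

/-- **Sandwich inequality from the proof of Theorem 2.** `ln T_K(R,C)` is within
`ln 𝒩 + ♥` of the log of the infimum of `G(x,y)/(x^R y^C)`. -/
theorem logTable_genfun_sandwich {m n : ℕ} (K : Fin m → Fin n → ℕ)
    (hK : ∀ i j, 0 < K i j)
    (R : Fin m → ℕ) (hR : ∀ i, 0 < R i) (C : Fin n → ℕ)
    (hCtilde : ∀ j, C j < ∑ i, K i j)
    (hT : 0 < tableCount (fun i j => (K i j : ℕ∞)) R C) :
    Real.log (tableCount (fun i j => (K i j : ℕ∞)) R C) ≤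
      Real.log (sInf {v : ℝ | ∃ (x : Fin m → ℝ) (y : Fin n → ℝ),
        (∀ i, 0 < x i) ∧ (∀ j, 0 < y j) ∧
        v = genFun K x y / (monom x R * monom y C)}) ∧
    Real.log (sInf {v : ℝ | ∃ (x : Fin m → ℝ) (y : Fin n → ℝ),
        (∀ i, 0 < x i) ∧ (∀ j, 0 < y j) ∧
        v = genFun K x y / (monom x R * monom y C)}) -
      Real.log (((∏ i, (1 + ∑ j, K i j)) + ∏ j, (1 + ∑ i, K i j) : ℕ)) -
      (-Real.log (Real.sqrt (2 * Real.pi * (∑ i, ∑ j, K i j))) +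
        ∑ i, Real.log (Real.sqrt (2 * Real.pi * (R i))) +
        ∑ j, Real.log (Real.sqrt (2 * Real.pi * (((∑ i, K i j) - C j : ℕ) : ℝ))) +
        ((m : ℝ) + (n : ℝ)) * Real.log (Real.exp 1 / Real.sqrt (2 * Real.pi))) ≤
      Real.log (tableCount (fun i j => (K i j : ℕ∞)) R C) := by
  have hC : ∀ j, C j ≤ ∑ i, K i j := fun j => (hCtilde j).le
  have hTpos : (0 : ℝ) < tableCount (fun i j => (K i j : ℕ∞)) R C := Nat.cast_pos.2 hT
  have hTle := tableCount_le_sInf K R hC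
  refine ⟨Real.log_le_log hTpos hTle, ?_⟩
  change Real.log (sInf (genFunRatios K R C)) - _ - _ ≤ _
  rcases Nat.eq_zero_or_pos m with rfl | hm
  · obtain rfl : n = 0 := by
      by_contra hn
      simpa using hCtilde ⟨0, Nat.pos_of_ne_zero hn⟩
    have h1 : sInf (genFunRatios K R C) = 1 := by
      have : genFunRatios K R C = {1} := by
        ext v
        simp [genFunRatios, genFun, monom]
      rw [this, csInf_singleton]
    have h2 : (0 : ℝ) ≤ Real.log (tableCount (fun i j => (K i j : ℕ∞)) R C) :=
      Real.log_nonneg (by exact_mod_cast hT)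
    have h3 : (0 : ℝ) ≤ Real.log 2 := Real.log_nonneg (by norm_num)
    rw [h1]
    norm_num
    linarith
  · rcases Nat.eq_zero_or_pos n with rfl | hn
    · obtain ⟨A, hA, -⟩ := Set.nonempty_of_ncard_ne_zero hT.ne'
      have h1 := hA ⟨0, hm⟩
      have h2 := hR ⟨0, hm⟩
      simp only [Finset.univ_eq_empty, Finset.sum_empty] at h1
      omega
    · obtain ⟨P, hP, hle, hP2⟩ := exists_sInf_le_mul_tableCount hm hn K R hR C hCtilde hT
      have hN : (0 : ℝ) < (∑ i, ∑ j, K i j : ℕ) := by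
        have : Nonempty (Fin m) := ⟨⟨0, hm⟩⟩
        have : Nonempty (Fin n) := ⟨⟨0, hn⟩⟩
        exact Nat.cast_pos.2 (Finset.sum_pos (fun i _ => Finset.sum_pos (fun j _ => hK i j)
          Finset.univ_nonempty) Finset.univ_nonempty)
      have hlog := Real.log_le_log (hTpos.trans_le hTle) hle
      rw [Real.log_mul hP.ne' hTpos.ne'] at hlog
      have hnum := log_le_of_two_pi_mul_sq_le hR (S := fun j => ∑ i, K i j - C j)
        (fun j => Nat.sub_pos_of_lt (hCtilde j)) hN hP
        (a := ∏ i, ((1 + ∑ j, K i j : ℕ) : ℝ)) (b := ∏ j, ((1 + ∑ i, K i j : ℕ) : ℝ))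
        (Finset.prod_pos fun i _ => Nat.cast_pos.2 (by omega))
        (Finset.prod_pos fun j _ => Nat.cast_pos.2 (by omega))
        (by simpa only [← Finset.prod_mul_distrib, mul_assoc] using hP2)
      push_cast at hnum hlog ⊢
      linarith
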